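/- Fix an integer d ≥ 1, p ∈ (1,∞), δ ≥ 0, and let (μ_t)_{t≥0} be a convolution semigroup in 𝒫_p(ℝ^d) with 𝒲_p(μ_t, δ_0) → 0 as t ↓ 0. Let f ∈ C₀(ℝ^d) and define u : [0,∞) → C₀(ℝ^d) by u(t) := 𝒮(t)f, where 𝒮(t)f := lim_{n→∞} 𝒮^n(t)f. Then u is a viscosity solution of the equation ∂_t u(t,x) = A^μ u(t)(x) + δ·|∇u(t,x)| on (0,∞)×ℝ^d with initial condition u(0,x) = f(x), where A^μ is the generator of the convolution semigroup (S^μ(t))_{t≥0}. -/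

import Mathlib

open MeasureTheory Filter Topology ENNReal NNReal Set ZeroAtInfty
noncomputable section

/-- Euclidean space ℝ^d. -/
abbrev Ed (d : ℕ) := EuclideanSpace ℝ (Fin d)

/-- `𝒫_p(ℝ^d)`: Borel probability measures with finite `p`-th moment. -/
def MemPp {d : ℕ} (p : ℝ) (μ : Measure (Ed d)) : Prop :=
  IsProbabilityMeasure μ ∧ ∫⁻ x, (‖x‖₊ : ℝ≥0∞) ^ p ∂μ < ∞

/-- `γ` is a coupling of `μ` and `ν`. -/
def IsCoupling {d : ℕ} (γ : Measure (Ed d × Ed d)) (μ ν : Measure (Ed d)) : Prop :=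
  γ.map Prod.fst = μ ∧ γ.map Prod.snd = ν

/-- The `p`-Wasserstein distance `𝒲_p(μ, ν)`. -/
def Wp {d : ℕ} (p : ℝ) (μ ν : Measure (Ed d)) : ℝ :=
  (⨅ γ ∈ {γ : Measure (Ed d × Ed d) | IsCoupling γ μ ν},
    (∫⁻ q, (‖q.2 - q.1‖₊ : ℝ≥0∞) ^ p ∂γ) ^ (1 / p)).toReal

/-- The scaled penalty `φ_t(r) = t·φ(r/t)` for `t > 0`; `φ_0(0) = 0`, `φ_0(r) = ∞` for `r > 0`. -/
def phit (φ : ℝ≥0 → ℝ≥0∞) (t : ℝ) (r : ℝ≥0) : ℝ≥0∞ :=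
  if 0 < t then (t.toNNReal : ℝ≥0∞) * φ (r / t.toNNReal) else (if r = 0 then 0 else ∞)

/-- `φ` is a penalty function: lower semicontinuous, convex, increasing, not constant,
`φ(0) = 0`, and `x ↦ φ(x^{1/p})` is convex. -/
structure IsPenalty (p : ℝ) (φ : ℝ≥0 → ℝ≥0∞) : Prop where
  lsc : LowerSemicontinuous φ
  convex : ∀ a b l m : ℝ≥0, l + m = 1 →
    φ (l * a + m * b) ≤ (l : ℝ≥0∞) * φ a + (m : ℝ≥0∞) * φ b
  mono : Monotone φ
  not_const : ∃ a b, φ a ≠ φ b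
  map_zero : φ 0 = 0
  convex_rpow : ∀ a b l m : ℝ≥0, l + m = 1 →
    φ ((l * a + m * b) ^ (1 / p)) ≤ (l : ℝ≥0∞) * φ (a ^ (1 / p)) + (m : ℝ≥0∞) * φ (b ^ (1 / p))

/-- The convex conjugate `φ*(y) = sup_{x ≥ 0} (xy − φ(x))`. -/
def phiStar (φ : ℝ≥0 → ℝ≥0∞) (y : ℝ≥0) : ℝ≥0∞ :=
  ⨆ x : ℝ≥0, ((x * y : ℝ≥0) : ℝ≥0∞) - φ x

/-- The one-step operator `S(t)f(x) = sup_ν ( ∫ f(x+y) ν(dy) − φ_t(𝒲_p(μ_t, ν)) )`. -/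
def Sop {d : ℕ} (p : ℝ) (φ : ℝ≥0 → ℝ≥0∞) (μt : Measure (Ed d)) (t : ℝ)
    (f : Ed d → ℝ) (x : Ed d) : ℝ :=
  sSup { r : ℝ | ∃ ν : Measure (Ed d), MemPp p ν ∧ ∃ c : ℝ, 0 ≤ c ∧
    phit φ t (Wp p μt ν).toNNReal ≤ ENNReal.ofReal c ∧ r = (∫ y, f (x + y) ∂ν) - c }

/-- The iterated operator `𝒮ⁿ(t) = S(2⁻ⁿ)^{∘ k} ∘ S(t − k·2⁻ⁿ)`, `k = ⌊2ⁿ t⌋`. -/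
def SiterN {d : ℕ} (p : ℝ) (φ : ℝ≥0 → ℝ≥0∞) (μ : ℝ → Measure (Ed d)) (n : ℕ) (t : ℝ)
    (f : Ed d → ℝ) : Ed d → ℝ :=
  (fun g => Sop p φ (μ ((2 : ℝ) ^ n)⁻¹) ((2 : ℝ) ^ n)⁻¹ g)^[⌊(2:ℝ)^n * t⌋₊]
    (Sop p φ (μ (t - ⌊(2:ℝ)^n * t⌋₊ * ((2:ℝ)^n)⁻¹)) (t - ⌊(2:ℝ)^n * t⌋₊ * ((2:ℝ)^n)⁻¹) f)

/-- The limiting operator `𝒮(t)f = lim_n 𝒮ⁿ(t)f` (a decreasing limit, i.e. an infimum). -/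
def Slim {d : ℕ} (p : ℝ) (φ : ℝ≥0 → ℝ≥0∞) (μ : ℝ → Measure (Ed d)) (t : ℝ)
    (f : Ed d → ℝ) (x : Ed d) : ℝ :=
  ⨅ n : ℕ, SiterN p φ μ n t f x

/-- `f ∈ C₀(ℝ^d)`: continuous and vanishing at infinity. -/
def IsC0 {d : ℕ} (f : Ed d → ℝ) : Prop :=
  Continuous f ∧ Tendsto f (cocompact (Ed d)) (𝓝 0)

/-- `(μ_t)_{t ≥ 0}` is a convolution semigroup in `𝒫_p(ℝ^d)`. -/
def IsConvSemigroup {d : ℕ} (p : ℝ) (μ : ℝ → Measure (Ed d)) : Prop :=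
  μ 0 = Measure.dirac 0 ∧ (∀ s t : ℝ, 0 ≤ s → 0 ≤ t → μ (s + t) = (μ s).conv (μ t)) ∧
    ∀ t : ℝ, 0 ≤ t → MemPp p (μ t)

/-- `𝒲_p(μ_t, δ_0) → 0` as `t ↓ 0`. -/
def WContinuousAtZero {d : ℕ} (p : ℝ) (μ : ℝ → Measure (Ed d)) : Prop :=
  Tendsto (fun t => Wp p (μ t) (Measure.dirac 0)) (𝓝[>] (0:ℝ)) (𝓝 0)

/-- The semigroup of the underlying Lévy process, `S^μ(t)f(x) = ∫ f(x+y) μ_t(dy)`. -/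
def Smu {d : ℕ} (μ : ℝ → Measure (Ed d)) (t : ℝ) (f : Ed d → ℝ) (x : Ed d) : ℝ :=
  ∫ y, f (x + y) ∂(μ t)

/-- `f ∈ D(A^μ)` with `A^μ f = Af`: `(S^μ(t)f − f)/t → Af` uniformly as `t ↓ 0`. -/
def HasGenerator {d : ℕ} (μ : ℝ → Measure (Ed d)) (f Af : Ed d → ℝ) : Prop :=
  TendstoUniformly (fun t x => (Smu μ t f x - f x) / t) Af (𝓝[>] (0:ℝ))

/-- `f ∈ C₀¹(ℝ^d)`: continuously differentiable, vanishing at infinity, with gradient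
vanishing at infinity. -/
def IsC01 {d : ℕ} (f : Ed d → ℝ) : Prop :=
  IsC0 f ∧ ContDiff ℝ 1 f ∧ Tendsto (fun x => gradient f x) (cocompact (Ed d)) (𝓝 0)


/-- The one-step operator with Wasserstein-ball constraint:
`S(t)f(x) = sup { ∫ f(x+y) ν(dy) : ν ∈ 𝒫_p(ℝ^d), 𝒲_p(μ_t, ν) ≤ δ·t }`. -/
def SopD {d : ℕ} (p δ : ℝ) (μt : Measure (Ed d)) (t : ℝ) (f : Ed d → ℝ) (x : Ed d) : ℝ :=
  sSup { r : ℝ | ∃ ν : Measure (Ed d), MemPp p ν ∧ Wp p μt ν ≤ δ * t ∧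
    r = ∫ y, f (x + y) ∂ν }

/-- The iterated operator `𝒮ⁿ(t) = S(2⁻ⁿ)^{∘ k} ∘ S(t − k·2⁻ⁿ)`, `k = ⌊2ⁿ t⌋`. -/
def SiterND {d : ℕ} (p δ : ℝ) (μ : ℝ → Measure (Ed d)) (n : ℕ) (t : ℝ)
    (f : Ed d → ℝ) : Ed d → ℝ :=
  (fun g => SopD p δ (μ ((2 : ℝ) ^ n)⁻¹) ((2 : ℝ) ^ n)⁻¹ g)^[⌊(2:ℝ)^n * t⌋₊]
    (SopD p δ (μ (t - ⌊(2:ℝ)^n * t⌋₊ * ((2:ℝ)^n)⁻¹)) (t - ⌊(2:ℝ)^n * t⌋₊ * ((2:ℝ)^n)⁻¹) f)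

/-- The limiting operator `𝒮(t)f = lim_n 𝒮ⁿ(t)f` (a decreasing limit, i.e. an infimum). -/
def SlimD {d : ℕ} (p δ : ℝ) (μ : ℝ → Measure (Ed d)) (t : ℝ)
    (f : Ed d → ℝ) (x : Ed d) : ℝ :=
  ⨅ n : ℕ, SiterND p δ μ n t f x

/-- A test function: `v : (0,∞) → C₀(ℝ^d)` differentiable w.r.t. the supremum norm with
derivative `v'`, and `v(t) ∈ D(A^μ) ∩ C₀¹(ℝ^d)` for all `t > 0`. -/
def IsTestFunction {d : ℕ} (μ : ℝ → Measure (Ed d)) (v v' : ℝ → C₀(Ed d, ℝ)) : Prop :=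
  ∀ t : ℝ, 0 < t →
    HasDerivAt v (v' t) t ∧ (∃ Af : Ed d → ℝ, HasGenerator μ (⇑(v t)) Af) ∧ IsC01 (⇑(v t))

/-- `u` is a viscosity subsolution of `∂_t u = A^μ u + δ|∇u|`, `u(0) = f`. -/
def IsViscositySubsolD {d : ℕ} (δ : ℝ) (μ : ℝ → Measure (Ed d))
    (f : C₀(Ed d, ℝ)) (u : ℝ → C₀(Ed d, ℝ)) : Prop :=
  ContinuousOn u (Ici 0) ∧ u 0 = f ∧
  ∀ t : ℝ, 0 < t → ∀ x : Ed d, ∀ v v' : ℝ → C₀(Ed d, ℝ), IsTestFunction μ v v' →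
    (∀ s : ℝ, 0 < s → ∀ y, u s y ≤ v s y) → v t x = u t x →
    ∀ Av : Ed d → ℝ, HasGenerator μ (⇑(v t)) Av →
      v' t x ≤ Av x + δ * ‖gradient (⇑(v t)) x‖

/-- `u` is a viscosity supersolution of `∂_t u = A^μ u + δ|∇u|`, `u(0) = f`. -/
def IsViscositySupersolD {d : ℕ} (δ : ℝ) (μ : ℝ → Measure (Ed d))
    (f : C₀(Ed d, ℝ)) (u : ℝ → C₀(Ed d, ℝ)) : Prop :=
  ContinuousOn u (Ici 0) ∧ u 0 = f ∧
  ∀ t : ℝ, 0 < t → ∀ x : Ed d, ∀ v v' : ℝ → C₀(Ed d, ℝ), IsTestFunction μ v v' →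
    (∀ s : ℝ, 0 < s → ∀ y, v s y ≤ u s y) → v t x = u t x →
    ∀ Av : Ed d → ℝ, HasGenerator μ (⇑(v t)) Av →
      Av x + δ * ‖gradient (⇑(v t)) x‖ ≤ v' t x


lemma pP_facts {p : ℝ} (hp : 1 < p) : (1:ℝ≥0∞) ≤ ENNReal.ofReal p ∧ ENNReal.ofReal p ≠ 0 ∧
    ENNReal.ofReal p ≠ ∞ ∧ (ENNReal.ofReal p).toReal = p := by
  refine ⟨?_, ?_, ENNReal.ofReal_ne_top, ENNReal.toReal_ofReal (by linarith)⟩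
  · rw [← ENNReal.ofReal_one]; exact ENNReal.ofReal_le_ofReal hp.le
  · have : 0 < p := by linarith
    simpa using this

lemma eLp_eq {α : Type*} [MeasurableSpace α] {d : ℕ} {p : ℝ} (hp : 1 < p) (γ : Measure α)
    (g : α → Ed d) : eLpNorm g (ENNReal.ofReal p) γ = (∫⁻ q, (‖g q‖₊ : ℝ≥0∞) ^ p ∂γ) ^ (1 / p) := by
  obtain ⟨h1, h2, h3, h4⟩ := pP_facts hp
  rw [eLpNorm_eq_lintegral_rpow_enorm_toReal h2 h3, h4]
  rfl

lemma memPp_iff {d : ℕ} {p : ℝ} (hp : 1 < p) (ν : Measure (Ed d)) :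
    MemPp p ν ↔ IsProbabilityMeasure ν ∧ eLpNorm (fun y : Ed d => y) (ENNReal.ofReal p) ν < ∞ := by
  unfold MemPp
  rw [eLp_eq hp]
  rw [ENNReal.rpow_lt_top_iff_of_pos (by positivity)]

/-- transport cost -/
def cst {d : ℕ} (p : ℝ) (γ : Measure (Ed d × Ed d)) : ℝ≥0∞ :=
  eLpNorm (fun q : Ed d × Ed d => q.2 - q.1) (ENNReal.ofReal p) γ

lemma Wp_eq {d : ℕ} {p : ℝ} (hp : 1 < p) (μ ν : Measure (Ed d)) :
    Wp p μ ν = (⨅ γ ∈ {γ : Measure (Ed d × Ed d) | IsCoupling γ μ ν}, cst p γ).toReal := by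
  unfold Wp cst
  simp_rw [eLp_eq hp]

lemma coupling_prob {d : ℕ} {γ : Measure (Ed d × Ed d)} {μ ν : Measure (Ed d)}
    (h : IsCoupling γ μ ν) [IsProbabilityMeasure μ] : IsProbabilityMeasure γ := by
  constructor
  have := h.1
  rw [← preimage_univ (f := Prod.fst), ← Measure.map_apply measurable_fst MeasurableSet.univ, this]
  simp

lemma eLp_fst {d : ℕ} {p : ℝ} {γ : Measure (Ed d × Ed d)} {μ ν : Measure (Ed d)}
    (h : IsCoupling γ μ ν) : eLpNorm (fun q : Ed d × Ed d => q.1) (ENNReal.ofReal p) γ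
      = eLpNorm (fun y : Ed d => y) (ENNReal.ofReal p) μ := by
  rw [← h.1, eLpNorm_map_measure (by fun_prop) (by fun_prop)]
  rfl

lemma eLp_snd {d : ℕ} {p : ℝ} {γ : Measure (Ed d × Ed d)} {μ ν : Measure (Ed d)}
    (h : IsCoupling γ μ ν) : eLpNorm (fun q : Ed d × Ed d => q.2) (ENNReal.ofReal p) γ
      = eLpNorm (fun y : Ed d => y) (ENNReal.ofReal p) ν := by
  rw [← h.2, eLpNorm_map_measure (by fun_prop) (by fun_prop)]
  rfl

lemma cst_le {d : ℕ} {p : ℝ} (hp : 1 < p) {γ : Measure (Ed d × Ed d)} {μ ν : Measure (Ed d)}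
    (h : IsCoupling γ μ ν) : cst p γ ≤ eLpNorm (fun y : Ed d => y) (ENNReal.ofReal p) ν +
      eLpNorm (fun y : Ed d => y) (ENNReal.ofReal p) μ := by
  rw [← eLp_fst h, ← eLp_snd h]
  exact eLpNorm_sub_le (by fun_prop) (by fun_prop) (pP_facts hp).1

lemma eLp_snd_le {d : ℕ} {p : ℝ} (hp : 1 < p) {γ : Measure (Ed d × Ed d)} {μ ν : Measure (Ed d)}
    (h : IsCoupling γ μ ν) : eLpNorm (fun y : Ed d => y) (ENNReal.ofReal p) ν ≤
      eLpNorm (fun y : Ed d => y) (ENNReal.ofReal p) μ + cst p γ := by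
  rw [← eLp_fst h, ← eLp_snd h]
  refine le_trans (le_of_eq ?_) (eLpNorm_add_le (by fun_prop) (by fun_prop) (pP_facts hp).1)
  congr 1; ext q; simp

lemma eLp_fst_le {d : ℕ} {p : ℝ} (hp : 1 < p) {γ : Measure (Ed d × Ed d)} {μ ν : Measure (Ed d)}
    (h : IsCoupling γ μ ν) : eLpNorm (fun y : Ed d => y) (ENNReal.ofReal p) μ ≤
      eLpNorm (fun y : Ed d => y) (ENNReal.ofReal p) ν + cst p γ := by
  rw [← eLp_fst h, ← eLp_snd h]
  refine le_trans (le_of_eq ?_) (eLpNorm_sub_le (by fun_prop) (by fun_prop) (pP_facts hp).1)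
  congr 1; ext q; simp

lemma coupling_of_Wp {d : ℕ} {p : ℝ} (hp : 1 < p) {μ ν : Measure (Ed d)} (hμ : MemPp p μ)
    (hν : MemPp p ν) {a b : ℝ} (h : Wp p μ ν ≤ a) (hab : a < b) :
    ∃ γ, IsCoupling γ μ ν ∧ cst p γ ≤ ENNReal.ofReal b := by
  rw [memPp_iff hp] at hμ hν
  have := hμ.1
  have := hν.1
  rw [Wp_eq hp] at h
  have hfin : (⨅ γ ∈ {γ : Measure (Ed d × Ed d) | IsCoupling γ μ ν}, cst p γ) ≠ ∞ := by
    have hc : IsCoupling (μ.prod ν) μ ν := by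
      constructor
      · simp
      · simp
    refine ne_top_of_le_ne_top ?_ (iInf₂_le (μ.prod ν) hc)
    refine ne_top_of_le_ne_top ?_ (cst_le hp hc)
    exact ENNReal.add_ne_top.2 ⟨hν.2.ne, hμ.2.ne⟩
  have hlt : (⨅ γ ∈ {γ : Measure (Ed d × Ed d) | IsCoupling γ μ ν}, cst p γ) < ENNReal.ofReal b := by
    rw [ENNReal.lt_ofReal_iff_toReal_lt hfin]
    linarith
  simp only [iInf_lt_iff] at hlt
  obtain ⟨γ, hγ, h⟩ := hlt
  exact ⟨γ, hγ, h.le⟩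

lemma Wp_le {d : ℕ} {p : ℝ} (hp : 1 < p) {μ ν : Measure (Ed d)} {γ : Measure (Ed d × Ed d)}
    (hγ : IsCoupling γ μ ν) {b : ℝ} (hb : 0 ≤ b) (h : cst p γ ≤ ENNReal.ofReal b) :
    Wp p μ ν ≤ b := by
  rw [Wp_eq hp]
  exact ENNReal.toReal_le_of_le_ofReal hb ((iInf₂_le γ hγ).trans h)

/-- the ambiguity set -/
def Bl {d : ℕ} (p δ : ℝ) (μ : ℝ → Measure (Ed d)) (h : ℝ) : Set (Measure (Ed d)) :=
  {ν | MemPp p ν ∧ Wp p (μ h) ν ≤ δ * h}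

/-- moment bound -/
def Kb {d : ℕ} (p δ : ℝ) (μ : ℝ → Measure (Ed d)) (h : ℝ) : ℝ :=
  (eLpNorm (fun y : Ed d => y) (ENNReal.ofReal p) (μ h)).toReal + δ * h

lemma Bl_moment {d : ℕ} {p δ : ℝ} (hp : 1 < p) (hδ : 0 ≤ δ) {μ : ℝ → Measure (Ed d)}
    (hμ : IsConvSemigroup p μ) {h : ℝ} (hh : 0 ≤ h) {ν : Measure (Ed d)} (hν : ν ∈ Bl p δ μ h) :
    eLpNorm (fun y : Ed d => y) (ENNReal.ofReal p) ν ≤ ENNReal.ofReal (Kb p δ μ h) := by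
  refine ENNReal.le_of_forall_pos_le_add fun ε hε _ => ?_
  obtain ⟨γ, hγ, hc⟩ := coupling_of_Wp hp (hμ.2.2 h hh) hν.1 hν.2
    (show δ * h < δ * h + ε by simpa using hε)
  refine (eLp_snd_le hp hγ).trans ?_
  unfold Kb
  have hfin := ((memPp_iff hp _).1 (hμ.2.2 h hh)).2
  rw [ENNReal.ofReal_add toReal_nonneg (by positivity), ENNReal.ofReal_toReal hfin.ne, add_assoc]
  gcongr
  refine hc.trans ?_
  rw [ENNReal.ofReal_add (by positivity) (by positivity)]
  simp

lemma Kb_zero {d : ℕ} {p δ : ℝ} (hp : 1 < p) {μ : ℝ → Measure (Ed d)}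
    (hμ : IsConvSemigroup p μ) : Kb p δ μ 0 = 0 := by
  have hp' : p ≠ 0 := by linarith
  have hp0 : 0 < p := by linarith
  unfold Kb
  rw [hμ.1, eLp_eq hp, lintegral_dirac]
  simp [hp0]

lemma memPp_dirac {d : ℕ} {p : ℝ} (hp : 1 < p) : MemPp p (Measure.dirac (0 : Ed d)) := by
  have hp0 : 0 < p := by linarith
  refine ⟨inferInstance, ?_⟩
  rw [lintegral_dirac]; simp [hp0]

lemma Kb_tendsto {d : ℕ} {p δ : ℝ} (hp : 1 < p) (hδ : 0 ≤ δ) {μ : ℝ → Measure (Ed d)}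
    (hμ : IsConvSemigroup p μ) (hμ0 : WContinuousAtZero p μ) {ε : ℝ} (hε : 0 < ε) :
    ∃ τ > 0, ∀ h, 0 ≤ h → h ≤ τ → 0 ≤ Kb p δ μ h ∧ Kb p δ μ h ≤ ε := by
  have h1 : ∀ᶠ h in 𝓝[>] (0:ℝ), Wp p (μ h) (Measure.dirac 0) < ε / 4 :=
    hμ0.eventually (gt_mem_nhds (by positivity))
  rw [eventually_nhdsWithin_iff, Metric.eventually_nhds_iff] at h1
  obtain ⟨τ, hτ, h1⟩ := h1
  refine ⟨min (τ / 2) (ε / (2 * (δ + 1))), by positivity, fun h hh0 hh => ?_⟩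
  refine ⟨by unfold Kb; positivity, ?_⟩
  rcases hh0.eq_or_lt with rfl | hpos
  · rw [Kb_zero hp hμ]; exact hε.le
  have hW := h1 (y := h) (by
    have := (le_min_iff.1 hh).1
    rw [Real.dist_eq, sub_zero, abs_of_pos hpos]; linarith) hpos
  obtain ⟨γ, hγ, hc⟩ := coupling_of_Wp hp (hμ.2.2 h hh0) (memPp_dirac hp) hW.le
    (show ε / 4 < ε / 2 by linarith)
  have h2 := eLp_fst_le hp hγ
  have h3 : eLpNorm (fun y : Ed d => y) (ENNReal.ofReal p) (Measure.dirac 0) = 0 := by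
    have hp0 : 0 < p := by linarith
    rw [eLp_eq hp, lintegral_dirac]
    simp [hp0]
  rw [h3, zero_add] at h2
  have h4 := ENNReal.toReal_le_of_le_ofReal (by positivity) (h2.trans hc)
  have h5 : δ * h ≤ ε / 2 := by
    have := (le_min_iff.1 hh).2
    rw [le_div_iff₀ (by positivity)] at this
    nlinarith
  unfold Kb
  linarith

lemma tail_bound {d : ℕ} {p : ℝ} (hp : 1 < p) {ν : Measure (Ed d)} [IsProbabilityMeasure ν] {K : ℝ}
    (hK : 0 ≤ K)
    (h : eLpNorm (fun y : Ed d => y) (ENNReal.ofReal p) ν ≤ ENNReal.ofReal K) {r : ℝ} (hr : 0 < r) :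
    ν.real {y | r < ‖y‖} ≤ (K / r) ^ p := by
  obtain ⟨h1, h2, h3, h4⟩ := pP_facts hp
  have := meas_ge_le_mul_pow_eLpNorm_enorm ν h2 h3 (f := fun y : Ed d => y) (by fun_prop)
    (ε := ENNReal.ofReal r) (by simpa using hr) (by simp)
  rw [h4] at this
  have hle : ν {y | r < ‖y‖} ≤ ENNReal.ofReal ((K / r) ^ p) := by
    refine (measure_mono ?_).trans (this.trans ?_)
    · intro y hy
      simp only [mem_setOf_eq] at hy ⊢
      rw [← ofReal_norm_eq_enorm]
      exact ENNReal.ofReal_le_ofReal hy.le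
    · rw [← ENNReal.mul_rpow_of_nonneg _ _ (by linarith), ← ENNReal.ofReal_rpow_of_nonneg (by positivity) (by linarith)]
      have : (ENNReal.ofReal r)⁻¹ * eLpNorm (fun y : Ed d => y) (ENNReal.ofReal p) ν ≤ ENNReal.ofReal (K / r) := by
        rw [← ENNReal.ofReal_inv_of_pos hr, div_eq_inv_mul, ENNReal.ofReal_mul (by positivity)]
        gcongr
      gcongr
  exact ENNReal.toReal_le_of_le_ofReal (by positivity) hle


/-- bounded uniformly continuous functions -/
structure Gd {d : ℕ} (g : Ed d → ℝ) : Prop where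
  uc : UniformContinuous g
  bdd : ∃ M, ∀ x, |g x| ≤ M

lemma Gd.integrable {d : ℕ} {g : Ed d → ℝ} (hg : Gd g) (ν : Measure (Ed d)) [IsProbabilityMeasure ν]
    (x : Ed d) : Integrable (fun y => g (x + y)) ν := by
  obtain ⟨M, hM⟩ := hg.bdd
  have := hg.uc.continuous
  exact Integrable.of_bound (by fun_prop) M (ae_of_all _ fun y => hM _)

/-- one-step operator -/
def SS {d : ℕ} (p δ : ℝ) (μ : ℝ → Measure (Ed d)) (h : ℝ) (g : Ed d → ℝ) (x : Ed d) : ℝ :=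
  SopD p δ (μ h) h g x

/-- shifted linear semigroup -/
def TT {d : ℕ} (μ : ℝ → Measure (Ed d)) (w : Ed d) (h : ℝ) (g : Ed d → ℝ) (x : Ed d) : ℝ :=
  ∫ y, g (x + (y + h • w)) ∂(μ h)

section
variable {d : ℕ} {p δ : ℝ} {μ : ℝ → Measure (Ed d)}

lemma shift_mem_Bl (hp : 1 < p) (hμ : IsConvSemigroup p μ)
    {h : ℝ} (hh : 0 ≤ h) {w : Ed d} (hw : ‖w‖ ≤ δ) :
    (μ h).map (fun y => y + h • w) ∈ Bl p δ μ h := by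
  have hδ : 0 ≤ δ := (norm_nonneg _).trans hw
  have hm := (memPp_iff hp _).1 (hμ.2.2 h hh)
  have := hm.1
  have hc : IsCoupling ((μ h).map (fun y => (y, y + h • w))) (μ h)
      ((μ h).map (fun y => y + h • w)) := by
    constructor
    · rw [Measure.map_map (by fun_prop) (by fun_prop)]
      exact Measure.map_id
    · rw [Measure.map_map (by fun_prop) (by fun_prop)]
      rfl
  have hcost : cst p ((μ h).map (fun y => (y, y + h • w))) ≤ ENNReal.ofReal (δ * h) := by
    unfold cst
    rw [eLpNorm_map_measure (by fun_prop) (by fun_prop)]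
    have : ((fun q : Ed d × Ed d => q.2 - q.1) ∘ fun y => (y, y + h • w)) = fun _ => h • w := by
      ext y; simp
    rw [this, eLpNorm_const _ (pP_facts hp).2.1 (by simpa using (NeZero.ne (μ h)))]
    simp only [measure_univ, ENNReal.one_rpow, mul_one]
    rw [← ofReal_norm, norm_smul, Real.norm_of_nonneg hh]
    apply ENNReal.ofReal_le_ofReal
    nlinarith
  refine ⟨(memPp_iff hp _).2 ⟨Measure.isProbabilityMeasure_map (by fun_prop), ?_⟩,
    Wp_le hp hc (by positivity) hcost⟩
  refine (eLp_snd_le hp hc).trans_lt ?_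
  exact ENNReal.add_lt_top.2 ⟨hm.2, hcost.trans_lt ENNReal.ofReal_lt_top⟩

lemma mu_mem_Bl (hp : 1 < p) (hδ : 0 ≤ δ) (hμ : IsConvSemigroup p μ)
    {h : ℝ} (hh : 0 ≤ h) : μ h ∈ Bl p δ μ h := by
  have := shift_mem_Bl hp hμ hh (w := (0 : Ed d)) (δ := δ) (by simpa using hδ)
  simpa using this

lemma SS_bdd {g : Ed d → ℝ} (hg : Gd g) (h : ℝ) (x : Ed d) :
    BddAbove { r : ℝ | ∃ ν : Measure (Ed d), MemPp p ν ∧ Wp p (μ h) ν ≤ δ * h ∧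
    r = ∫ y, g (x + y) ∂ν } := by
  obtain ⟨M, hM⟩ := hg.bdd
  refine ⟨M, ?_⟩
  rintro _ ⟨ν, hν, -, rfl⟩
  have := hν.1
  calc ∫ y, g (x + y) ∂ν ≤ ∫ y, M ∂ν :=
        integral_mono (hg.integrable ν x) (integrable_const _) fun y => (le_abs_self _).trans (hM _)
    _ = M := by simp

lemma le_SS {g : Ed d → ℝ} (hg : Gd g) {h : ℝ} {ν : Measure (Ed d)}
    (hν : ν ∈ Bl p δ μ h) (x : Ed d) : ∫ y, g (x + y) ∂ν ≤ SS p δ μ h g x :=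
  le_csSup (SS_bdd hg h x) ⟨ν, hν.1, hν.2, rfl⟩

lemma SS_le (hp : 1 < p) (hδ : 0 ≤ δ) (hμ : IsConvSemigroup p μ) {g : Ed d → ℝ}
    {h : ℝ} (hh : 0 ≤ h) {x : Ed d} {c : ℝ}
    (H : ∀ ν ∈ Bl p δ μ h, IsProbabilityMeasure ν → ∫ y, g (x + y) ∂ν ≤ c) : SS p δ μ h g x ≤ c := by
  refine csSup_le ?_ ?_
  · have := mu_mem_Bl hp hδ hμ hh
    exact ⟨_, μ h, this.1, this.2, rfl⟩
  · rintro _ ⟨ν, hν, hW, rfl⟩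
    exact H ν ⟨hν, hW⟩ hν.1

lemma SS_near (hp : 1 < p) (hδ : 0 ≤ δ) (hμ : IsConvSemigroup p μ) {g : Ed d → ℝ}
    {h : ℝ} (hh : 0 ≤ h) (x : Ed d) {ε : ℝ} (hε : 0 < ε) :
    ∃ ν ∈ Bl p δ μ h, SS p δ μ h g x ≤ ∫ y, g (x + y) ∂ν + ε := by
  by_contra! H
  have := SS_le hp hδ hμ hh (x := x) (g := g) (c := SS p δ μ h g x - ε)
    (fun ν hν _ => by linarith [H ν hν])
  linarith

lemma SS_mono (hp : 1 < p) (hδ : 0 ≤ δ) (hμ : IsConvSemigroup p μ) {g₁ g₂ : Ed d → ℝ}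
    (h1 : Gd g₁) (h2 : Gd g₂) {h : ℝ} (hh : 0 ≤ h) {c : ℝ} (H : ∀ x, g₁ x ≤ g₂ x + c) (x : Ed d) :
    SS p δ μ h g₁ x ≤ SS p δ μ h g₂ x + c := by
  refine SS_le hp hδ hμ hh fun ν hν hpr => ?_
  have : ∫ y, g₁ (x + y) ∂ν ≤ ∫ y, (g₂ (x + y) + c) ∂ν :=
    integral_mono (h1.integrable ν x) ((h2.integrable ν x).add (integrable_const _)) fun y => H _
  rw [integral_add (h2.integrable ν x) (integrable_const _)] at this
  simp at this
  linarith [le_SS h2 hν x]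

lemma SS_shift (hp : 1 < p) (hδ : 0 ≤ δ) (hμ : IsConvSemigroup p μ) {g : Ed d → ℝ}
    (hg : Gd g) {h : ℝ} (hh : 0 ≤ h) {r c : ℝ} (H : ∀ x z, dist x z < r → g x ≤ g z + c)
    (x z : Ed d) (hxz : dist x z < r) : SS p δ μ h g x ≤ SS p δ μ h g z + c := by
  refine SS_le hp hδ hμ hh fun ν hν hpr => ?_
  have : ∫ y, g (x + y) ∂ν ≤ ∫ y, (g (z + y) + c) ∂ν :=
    integral_mono (hg.integrable ν x) ((hg.integrable ν z).add (integrable_const _))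
      fun y => H _ _ (by simpa using hxz)
  rw [integral_add (hg.integrable ν z) (integrable_const _)] at this
  simp at this
  linarith [le_SS hg hν z]

lemma SS_abs (hp : 1 < p) (hδ : 0 ≤ δ) (hμ : IsConvSemigroup p μ) {g : Ed d → ℝ}
    (hg : Gd g) {h : ℝ} (hh : 0 ≤ h) {M : ℝ} (hM : ∀ x, |g x| ≤ M) (x : Ed d) :
    |SS p δ μ h g x| ≤ M := by
  rw [abs_le]
  constructor
  · have hm := mu_mem_Bl hp hδ hμ hh
    have := hm.1.1
    refine le_trans ?_ (le_SS hg hm x)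
    calc -M = ∫ y, -M ∂(μ h) := by simp
      _ ≤ _ := integral_mono (integrable_const _) (hg.integrable _ x) fun y => (abs_le.1 (hM _)).1
  · refine SS_le hp hδ hμ hh fun ν hν hpr => ?_
    calc ∫ y, g (x + y) ∂ν ≤ ∫ y, M ∂ν :=
        integral_mono (hg.integrable ν x) (integrable_const _) fun y => (le_abs_self _).trans (hM _)
    _ = M := by simp

lemma Gd.modulus {g : Ed d → ℝ} (hg : Gd g) {ε : ℝ} (hε : 0 < ε) :
    ∃ r > 0, ∀ x z, dist x z < r → g x ≤ g z + ε := by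
  obtain ⟨r, hr, H⟩ := Metric.uniformContinuous_iff.1 hg.uc ε hε
  refine ⟨r, hr, fun x z hxz => ?_⟩
  have := H hxz
  rw [Real.dist_eq, abs_lt] at this
  linarith

lemma Gd.of_modulus {g : Ed d → ℝ} (hb : ∃ M, ∀ x, |g x| ≤ M)
    (H : ∀ ε > 0, ∃ r > 0, ∀ x z, dist x z < r → g x ≤ g z + ε) : Gd g := by
  refine ⟨Metric.uniformContinuous_iff.2 fun ε hε => ?_, hb⟩
  obtain ⟨r, hr, H⟩ := H (ε / 2) (by positivity)
  refine ⟨r, hr, fun x z hxz => ?_⟩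
  rw [Real.dist_eq, abs_lt]
  have h1 := H x z hxz
  have h2 := H z x (by rwa [dist_comm])
  constructor <;> linarith

lemma Gd_SS (hp : 1 < p) (hδ : 0 ≤ δ) (hμ : IsConvSemigroup p μ) {g : Ed d → ℝ}
    (hg : Gd g) {h : ℝ} (hh : 0 ≤ h) : Gd (SS p δ μ h g) := by
  obtain ⟨M, hM⟩ := hg.bdd
  refine Gd.of_modulus ⟨M, SS_abs hp hδ hμ hg hh hM⟩ fun ε hε => ?_
  obtain ⟨r, hr, H⟩ := hg.modulus hε
  exact ⟨r, hr, SS_shift hp hδ hμ hg hh H⟩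

lemma TT_le_SS (hp : 1 < p) (hμ : IsConvSemigroup p μ) {g : Ed d → ℝ}
    (hg : Gd g) {h : ℝ} (hh : 0 ≤ h) {w : Ed d} (hw : ‖w‖ ≤ δ) (x : Ed d) :
    TT μ w h g x ≤ SS p δ μ h g x := by
  have := le_SS hg (shift_mem_Bl hp hμ hh hw) x
  have hc := hg.uc.continuous
  rwa [integral_map (by fun_prop) (by fun_prop)] at this

lemma TT_integrable (hμ : IsConvSemigroup p μ) {g : Ed d → ℝ}
    (hg : Gd g) {h : ℝ} (hh : 0 ≤ h) {w : Ed d} (x : Ed d) :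
    Integrable (fun y => g (x + (y + h • w))) (μ h) := by
  have := (hμ.2.2 h hh).1
  obtain ⟨M, hM⟩ := hg.bdd
  have := hg.uc.continuous
  exact Integrable.of_bound (by fun_prop) M (ae_of_all _ fun y => hM _)

lemma TT_mono (hμ : IsConvSemigroup p μ) {g₁ g₂ : Ed d → ℝ}
    (h1 : Gd g₁) (h2 : Gd g₂) {h : ℝ} (hh : 0 ≤ h) {c : ℝ} {w : Ed d}
    (H : ∀ x, g₁ x ≤ g₂ x + c) (x : Ed d) :
    TT μ w h g₁ x ≤ TT μ w h g₂ x + c := by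
  have := (hμ.2.2 h hh).1
  unfold TT
  have : ∫ y, g₁ (x + (y + h • w)) ∂(μ h) ≤ ∫ y, (g₂ (x + (y + h • w)) + c) ∂(μ h) :=
    integral_mono (TT_integrable hμ h1 hh x) ((TT_integrable hμ h2 hh x).add (integrable_const _)) fun y => H _
  rw [integral_add (TT_integrable hμ h2 hh x) (integrable_const _)] at this
  simpa using this

lemma TT_add (hμ : IsConvSemigroup p μ) {g : Ed d → ℝ}
    (hg : Gd g) {s t : ℝ} (hs : 0 ≤ s) (ht : 0 ≤ t) {w : Ed d} (x : Ed d) :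
    TT μ w (s + t) g x = TT μ w s (TT μ w t g) x := by
  have := (hμ.2.2 s hs).1
  have := (hμ.2.2 t ht).1
  have hc := hg.uc.continuous
  obtain ⟨M, hM⟩ := hg.bdd
  unfold TT
  rw [hμ.2.1 s t hs ht, Measure.conv, integral_map (by fun_prop) (by fun_prop), integral_prod]
  · congr 1; ext y; congr 1; ext z; congr 1
    rw [add_smul]; abel
  · exact Integrable.of_bound (by fun_prop) M (ae_of_all _ fun y => hM _)

lemma Gd_TT (hμ : IsConvSemigroup p μ) {g : Ed d → ℝ}
    (hg : Gd g) {h : ℝ} (hh : 0 ≤ h) {w : Ed d} : Gd (TT μ w h g) := by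
  obtain ⟨M, hM⟩ := hg.bdd
  have := (hμ.2.2 h hh).1
  refine Gd.of_modulus ⟨M, fun x => ?_⟩ fun ε hε => ?_
  · have := norm_integral_le_of_norm_le_const (μ := μ h) (f := fun y => g (x + (y + h • w))) (C := M)
      (ae_of_all _ fun y => hM _)
    simpa [TT] using this
  obtain ⟨r, hr, H⟩ := hg.modulus hε
  refine ⟨r, hr, fun x z hxz => ?_⟩
  have : ∫ y, g (x + (y + h • w)) ∂(μ h) ≤ ∫ y, (g (z + (y + h • w)) + ε) ∂(μ h) :=
    integral_mono (TT_integrable hμ hg hh x) ((TT_integrable hμ hg hh z).add (integrable_const _))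
      fun y => H _ _ (by simpa using hxz)
  rw [integral_add (TT_integrable hμ hg hh z) (integrable_const _)] at this
  simpa [TT] using this

end


section
variable {d : ℕ} {p δ : ℝ} {μ : ℝ → Measure (Ed d)}

open ProbabilityTheory in
lemma SS_super (hp : 1 < p) (hδ : 0 ≤ δ) (hμ : IsConvSemigroup p μ) {g : Ed d → ℝ}
    (hg : Gd g) {s t : ℝ} (hs : 0 ≤ s) (ht : 0 ≤ t) (x : Ed d) :
    SS p δ μ s (SS p δ μ t g) x ≤ SS p δ μ (s + t) g x := by
  refine SS_le hp hδ hμ hs fun ν₁ hν₁ hpr₁ => ?_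
  refine le_of_forall_pos_le_add fun ε' hε' => ?_
  obtain ⟨ε, hε, rfl⟩ : ∃ ε > 0, ε' = 3 * ε := ⟨ε' / 3, by positivity, by ring⟩
  obtain ⟨r, hr, H⟩ := hg.modulus hε
  have HS := SS_shift hp hδ hμ hg ht H
  classical
  let D := TopologicalSpace.denseSeq (Ed d)
  have hD : ∀ y : Ed d, ∃ n, dist y (D n) < r := fun y =>
    (TopologicalSpace.denseRange_denseSeq (Ed d)).exists_dist_lt y hr
  let i : Ed d → ℕ := fun y => Nat.find (hD y)
  have hi : Measurable i := measurable_find hD fun k =>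
    measurableSet_lt (by fun_prop) (by fun_prop)
  have hid : ∀ y, dist y (D (i y)) < r := fun y => Nat.find_spec (hD y)
  choose N hN hN' using fun n => SS_near hp hδ hμ ht (g := g) (x + D n) hε
  have hNp : ∀ n, IsProbabilityMeasure (N n) := fun n => (hN n).1.1
  let κ : Kernel (Ed d) (Ed d) := (Kernel.ofFunOfCountable N).comap i hi
  have hκ : ∀ y, κ y = N (i y) := fun y => rfl
  have : IsMarkovKernel κ := ⟨fun y => by rw [hκ]; infer_instance⟩
  let ν : Measure (Ed d) := (ν₁ ⊗ₘ κ).map (fun q => q.1 + q.2)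
  have hνpr : IsProbabilityMeasure ν := Measure.isProbabilityMeasure_map (by fun_prop)
  -- couplings
  have key : ∀ η : ℝ, 0 < η → ∃ Γ, IsCoupling Γ (μ (s + t)) ν ∧
      cst p Γ ≤ ENNReal.ofReal (δ * (s + t) + η) := by
    intro η hη
    obtain ⟨γ₁, hγ₁, hc₁⟩ := coupling_of_Wp hp (hμ.2.2 s hs) hν₁.1 hν₁.2
      (show δ * s < δ * s + η / 2 by linarith)
    choose G hG hG' using fun n => coupling_of_Wp hp (hμ.2.2 t ht) (hN n).1 (hN n).2
      (show δ * t < δ * t + η / 2 by linarith)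
    have := (hμ.2.2 s hs).1
    have := (hμ.2.2 t ht).1
    have hγ₁p := coupling_prob hγ₁
    have hGp : ∀ n, IsProbabilityMeasure (G n) := fun n => coupling_prob (hG n)
    let k : Kernel (Ed d × Ed d) (Ed d × Ed d) :=
      (Kernel.ofFunOfCountable G).comap (fun q => i q.2) (hi.comp measurable_snd)
    have hk : ∀ y, k y = G (i y.2) := fun y => rfl
    have : IsMarkovKernel k := ⟨fun y => by rw [hk]; infer_instance⟩
    refine ⟨(γ₁ ⊗ₘ k).map (fun q => (q.1.1 + q.2.1, q.1.2 + q.2.2)), ⟨?_, ?_⟩, ?_⟩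
    · rw [Measure.map_map (by fun_prop) (by fun_prop), hμ.2.1 s t hs ht, Measure.conv]
      refine Measure.ext_of_lintegral _ fun φ hφ => ?_
      rw [lintegral_map hφ (by fun_prop), lintegral_map hφ (by fun_prop),
        Measure.lintegral_compProd (by simp only [Function.comp_def]; fun_prop), lintegral_prod _ (by fun_prop), ← hγ₁.1,
        lintegral_map (by fun_prop) (by fun_prop)]
      congr 1; ext a
      rw [hk, ← (hG (i a.2)).1, lintegral_map (by fun_prop) (by fun_prop)]
      rfl
    · rw [Measure.map_map (by fun_prop) (by fun_prop)]
      refine Measure.ext_of_lintegral _ fun φ hφ => ?_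
      have hφ2 : Measurable fun q : Ed d × Ed d => φ (q.1 + q.2) := by fun_prop
      have hm := Measurable.lintegral_kernel_prod_right' (κ := κ) hφ2
      rw [lintegral_map hφ (by fun_prop), lintegral_map hφ (by fun_prop),
        Measure.lintegral_compProd (by simp only [Function.comp_def]; fun_prop),
        Measure.lintegral_compProd hφ2]
      conv_rhs => rw [← hγ₁.2]
      rw [lintegral_map hm (by fun_prop)]
      congr 1; ext a
      rw [hk, hκ, ← (hG (i a.2)).2, lintegral_map (by fun_prop) (by fun_prop)]
      rfl
    · unfold cst
      rw [eLpNorm_map_measure (by fun_prop) (by fun_prop)]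
      have e1 : ((fun q : Ed d × Ed d => q.2 - q.1) ∘
          fun q : (Ed d × Ed d) × (Ed d × Ed d) => (q.1.1 + q.2.1, q.1.2 + q.2.2)) =
          (fun q => q.1.2 - q.1.1) + (fun q => q.2.2 - q.2.1) := by
        ext q; simp; ring
      rw [e1]
      refine (eLpNorm_add_le (by fun_prop) (by fun_prop) (pP_facts hp).1).trans ?_
      have e2 : δ * (s + t) + η = (δ * s + η / 2) + (δ * t + η / 2) := by ring
      rw [e2, ENNReal.ofReal_add (by positivity) (by positivity)]
      gcongr
      · refine le_trans (le_of_eq ?_) hc₁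
        unfold cst
        have : γ₁ = (γ₁ ⊗ₘ k).map Prod.fst := (Measure.fst_compProd γ₁ k).symm
        conv_rhs => rw [this]
        rw [eLpNorm_map_measure (by fun_prop) (by fun_prop)]
        rfl
      · rw [eLp_eq hp, Measure.lintegral_compProd (by fun_prop)]
        have hp0 : 0 < p := by linarith
        rw [one_div, ENNReal.rpow_inv_le_iff hp0]
        calc ∫⁻ a, ∫⁻ b, (‖b.2 - b.1‖₊ : ℝ≥0∞) ^ p ∂(k a) ∂γ₁
            ≤ ∫⁻ a, ENNReal.ofReal (δ * t + η / 2) ^ p ∂γ₁ := by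
              refine lintegral_mono fun a => ?_
              have := hG' (i a.2)
              unfold cst at this
              rw [eLp_eq hp, one_div, ENNReal.rpow_inv_le_iff hp0] at this
              exact this
          _ = _ := by simp
  have hνBl : ν ∈ Bl p δ μ (s + t) := by
    constructor
    · obtain ⟨Γ, hΓ, hc⟩ := key 1 one_pos
      refine (memPp_iff hp _).2 ⟨hνpr, (eLp_snd_le hp hΓ).trans_lt ?_⟩
      exact ENNReal.add_lt_top.2 ⟨((memPp_iff hp _).1 (hμ.2.2 (s + t) (by positivity))).2,
        hc.trans_lt ENNReal.ofReal_lt_top⟩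
    · refine le_of_forall_pos_le_add fun η hη => ?_
      obtain ⟨Γ, hΓ, hc⟩ := key η hη
      exact Wp_le hp hΓ (by positivity) hc
  refine le_trans ?_ (add_le_add_left (le_SS hg hνBl x) _)
  have hcont := hg.uc.continuous
  obtain ⟨M, hM⟩ := hg.bdd
  have hInteg : Integrable (fun q : Ed d × Ed d => g (x + (q.1 + q.2))) (ν₁ ⊗ₘ κ) :=
    Integrable.of_bound (by fun_prop) M (ae_of_all _ fun y => hM _)
  rw [integral_map (by fun_prop) (by fun_prop), Measure.integral_compProd hInteg]
  have hInteg2 : Integrable (fun y => ∫ z, g (x + (y + z)) ∂(κ y)) ν₁ :=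
    MeasureTheory.Integrable.integral_compProd (a := ()) (κ := Kernel.const Unit ν₁)
      (η := Kernel.prodMkLeft Unit κ) hInteg
  have : ∫ y, SS p δ μ t g (x + y) ∂ν₁ ≤ ∫ y, (∫ z, g (x + (y + z)) ∂(κ y) + 3 * ε) ∂ν₁ := by
    refine integral_mono ((Gd_SS hp hδ hμ hg ht).integrable ν₁ x)
      (hInteg2.add (integrable_const _)) fun y => ?_
    have a1 := HS (x + y) (x + D (i y)) (by simpa using hid y)
    have a2 := hN' (i y)
    have a3 : ∫ z, g (x + D (i y) + z) ∂(N (i y)) ≤ ∫ z, (g (x + (y + z)) + ε) ∂(N (i y)) := by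
      have e : ∀ z, x + (y + z) = x + y + z := fun z => by abel
      simp only [e]
      refine integral_mono (hg.integrable _ _) ((hg.integrable _ _).add (integrable_const _))
        fun z => H _ _ ?_
      have := hid y
      rw [dist_comm] at this
      simpa using this
    rw [integral_add (by simpa only [add_assoc] using hg.integrable (N (i y)) (x + y))
      (integrable_const _)] at a3
    simp at a3
    simp only [hκ]
    linarith
  rw [integral_add hInteg2 (integrable_const _)] at this
  simpa using this

end


section
variable {d : ℕ} {p δ : ℝ} {μ : ℝ → Measure (Ed d)}

lemma abs_int_le {α : Type*} [MeasurableSpace α] {ν : Measure α} [IsProbabilityMeasure ν]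
    {G : α → ℝ} {A : Set α} (hA : MeasurableSet A) {a b : ℝ}
    (H : ∀ y, |G y| ≤ a + b * A.indicator (fun _ => (1:ℝ)) y) : |∫ y, G y ∂ν| ≤ a + b * ν.real A := by
  have hi : Integrable (A.indicator (fun _ => (1:ℝ))) ν := (integrable_const _).indicator hA
  calc |∫ y, G y ∂ν| ≤ ∫ y, (a + b * A.indicator (fun _ => (1:ℝ)) y) ∂ν :=
        norm_integral_le_of_norm_le (f := G)
          (g := fun y => a + b * A.indicator (fun _ => (1:ℝ)) y)
          ((integrable_const _).add (hi.const_mul b)) (ae_of_all _ H)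
    _ = a + b * ν.real A := by
      rw [integral_add (integrable_const _) (hi.const_mul b), integral_const_mul,
        integral_indicator_const _ hA]
      simp

lemma meas_tail (r : ℝ) : MeasurableSet {y : Ed d | r < ‖y‖} :=
  measurableSet_lt measurable_const measurable_norm

lemma near_int {g : Ed d → ℝ} (hg : Gd g) {M : ℝ} (hM : ∀ x, |g x| ≤ M) {ε r : ℝ}
    (H : ∀ x z, dist x z < r → g x ≤ g z + ε) (hε : 0 < ε) (hr : 0 < r)
    (ν : Measure (Ed d)) [IsProbabilityMeasure ν] (x : Ed d) :
    |∫ y, g (x + y) ∂ν - g x| ≤ ε + 2 * M * ν.real {y | r / 2 < ‖y‖} := by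
  have e : ∫ y, g (x + y) ∂ν - g x = ∫ y, (g (x + y) - g x) ∂ν := by
    rw [integral_sub (hg.integrable ν x) (integrable_const _)]; simp
  rw [e]
  refine abs_int_le (meas_tail _) fun y => ?_
  by_cases hy : r / 2 < ‖y‖
  · rw [indicator_of_mem (by exact hy)]
    have h1 := abs_le.1 (hM (x + y))
    have h2 := abs_le.1 (hM x)
    rw [abs_le]
    constructor <;> linarith
  · rw [indicator_of_notMem (by exact hy)]
    have h1 := H (x + y) x (by simp; linarith)
    have h2 := H x (x + y) (by simp; linarith)
    rw [abs_le]
    constructor <;> linarith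

lemma Bl_tail (hp : 1 < p) (hδ : 0 ≤ δ) (hμ : IsConvSemigroup p μ) {h : ℝ} (hh : 0 ≤ h)
    {ν : Measure (Ed d)} (hν : ν ∈ Bl p δ μ h) {r : ℝ} (hr : 0 < r) :
    ν.real {y | r < ‖y‖} ≤ (Kb p δ μ h / r) ^ p := by
  have := hν.1.1
  exact tail_bound hp (by unfold Kb; positivity) (Bl_moment hp hδ hμ hh hν) hr

lemma tail_small (hp : 1 < p) (hδ : 0 ≤ δ) (hμ : IsConvSemigroup p μ)
    (hμ0 : WContinuousAtZero p μ) {r ε : ℝ} (hr : 0 < r) (hε : 0 < ε) :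
    ∃ τ > 0, ∀ h, 0 ≤ h → h ≤ τ → ∀ ν ∈ Bl p δ μ h, ν.real {y | r < ‖y‖} ≤ ε := by
  have hp0 : 0 < p := by linarith
  obtain ⟨τ, hτ, H⟩ := Kb_tendsto hp hδ hμ hμ0 (ε := r * ε ^ (1 / p)) (by positivity)
  refine ⟨τ, hτ, fun h hh hhτ ν hν => (Bl_tail hp hδ hμ hh hν hr).trans ?_⟩
  obtain ⟨h1, h2⟩ := H h hh hhτ
  calc (Kb p δ μ h / r) ^ p ≤ (ε ^ (1 / p)) ^ p := by
        gcongr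
        rw [div_le_iff₀ hr]; linarith
    _ = ε := by
      rw [← Real.rpow_mul hε.le, one_div, inv_mul_cancel₀ hp0.ne', Real.rpow_one]

lemma strong_cont (hp : 1 < p) (hδ : 0 ≤ δ) (hμ : IsConvSemigroup p μ)
    (hμ0 : WContinuousAtZero p μ) {g : Ed d → ℝ} (hg : Gd g) {ε : ℝ} (hε : 0 < ε) :
    ∃ τ > 0, ∀ h, 0 ≤ h → h ≤ τ → ∀ ν ∈ Bl p δ μ h, ∀ x, |∫ y, g (x + y) ∂ν - g x| ≤ ε := by
  obtain ⟨M, hM⟩ := hg.bdd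
  have hM0 : 0 ≤ M := (abs_nonneg _).trans (hM 0)
  obtain ⟨r, hr, H⟩ := hg.modulus (show 0 < ε / 2 by positivity)
  obtain ⟨τ, hτ, H2⟩ := tail_small hp hδ hμ hμ0 (show 0 < r / 2 by positivity)
    (show 0 < ε / (4 * (M + 1)) by positivity)
  refine ⟨τ, hτ, fun h hh hhτ ν hν x => ?_⟩
  have := hν.1.1
  refine (near_int hg hM H (by positivity) hr ν x).trans ?_
  have h3 := H2 h hh hhτ ν hν
  rw [le_div_iff₀ (by positivity)] at h3
  have h4 : 0 ≤ ν.real {y | r / 2 < ‖y‖} := measureReal_nonneg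
  nlinarith

lemma strong_cont_SS (hp : 1 < p) (hδ : 0 ≤ δ) (hμ : IsConvSemigroup p μ)
    (hμ0 : WContinuousAtZero p μ) {g : Ed d → ℝ} (hg : Gd g) {ε : ℝ} (hε : 0 < ε) :
    ∃ τ > 0, ∀ h, 0 ≤ h → h ≤ τ → ∀ x, SS p δ μ h g x ≤ g x + ε ∧ g x ≤ TT μ 0 h g x + ε := by
  obtain ⟨τ, hτ, H⟩ := strong_cont hp hδ hμ hμ0 hg hε
  refine ⟨τ, hτ, fun h hh hhτ x => ⟨?_, ?_⟩⟩
  · refine SS_le hp hδ hμ hh fun ν hν _ => ?_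
    linarith [(abs_le.1 (H h hh hhτ ν hν x)).2]
  · have := H h hh hhτ _ (mu_mem_Bl hp hδ hμ hh) x
    simp only [TT, smul_zero, add_zero]
    linarith [(abs_le.1 this).1]

lemma SS_zero (hp : 1 < p) (hδ : 0 ≤ δ) (hμ : IsConvSemigroup p μ)
    (hμ0 : WContinuousAtZero p μ) {g : Ed d → ℝ} (hg : Gd g) : SS p δ μ 0 g = g := by
  ext x
  apply le_antisymm
  · refine le_of_forall_pos_le_add fun ε hε => ?_
    obtain ⟨τ, hτ, H⟩ := strong_cont_SS hp hδ hμ hμ0 hg hε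
    exact (H 0 le_rfl hτ.le x).1
  · refine le_of_forall_pos_le_add fun ε hε => ?_
    obtain ⟨τ, hτ, H⟩ := strong_cont_SS hp hδ hμ hμ0 hg hε
    refine (H 0 le_rfl hτ.le x).2.trans ?_
    gcongr
    exact TT_le_SS hp hμ hg le_rfl (by simpa using hδ) x

lemma vanish (hp : 1 < p) (hδ : 0 ≤ δ) (hμ : IsConvSemigroup p μ)
    {g : Ed d → ℝ} (hg : Gd g) (hv : Tendsto g (cocompact (Ed d)) (𝓝 0)) {h : ℝ} (hh : 0 ≤ h)
    {ε : ℝ} (hε : 0 < ε) :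
    ∃ R, ∀ x : Ed d, R < ‖x‖ → -ε ≤ TT μ 0 h g x ∧ SS p δ μ h g x ≤ ε := by
  have hp0 : 0 < p := by linarith
  obtain ⟨M, hM⟩ := hg.bdd
  have hM0 : 0 ≤ M := (abs_nonneg _).trans (hM 0)
  obtain ⟨R₀, hR₀⟩ : ∃ R₀, ∀ x : Ed d, R₀ < ‖x‖ → |g x| ≤ ε / 2 := by
    have h1 : ∀ᶠ x in cocompact (Ed d), |g x| ≤ ε / 2 := by
      filter_upwards [Metric.tendsto_nhds.1 hv (ε / 2) (by positivity)] with x hx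
      rw [Real.dist_eq, sub_zero] at hx; exact hx.le
    rw [← Metric.cobounded_eq_cocompact, ← comap_norm_atTop, eventually_comap] at h1
    obtain ⟨R₀, h2⟩ := eventually_atTop.1 h1
    exact ⟨R₀, fun x hx => h2 ‖x‖ hx.le x rfl⟩
  have hK : 0 ≤ Kb p δ μ h := by unfold Kb; positivity
  set κ := ε / (2 * (M + 1)) with hκ
  have hκ0 : 0 < κ := by positivity
  set R := (Kb p δ μ h + 1) / κ ^ (1 / p) with hR
  have hR0 : 0 < R := by positivity
  have main : ∀ x : Ed d, R₀ + R < ‖x‖ → ∀ ν ∈ Bl p δ μ h, |∫ y, g (x + y) ∂ν| ≤ ε := by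
    intro x hx ν hν
    have := hν.1.1
    have h1 : |∫ y, g (x + y) ∂ν| ≤ ε / 2 + M * ν.real {y | R < ‖y‖} := by
      refine abs_int_le (meas_tail _) fun y => ?_
      by_cases hy : R < ‖y‖
      · rw [indicator_of_mem (by exact hy)]
        linarith [hM (x + y)]
      · rw [indicator_of_notMem (by exact hy)]
        have : ‖x‖ ≤ ‖x + y‖ + ‖y‖ := by
          have := norm_sub_le (x + y) y
          simpa using this
        linarith [hR₀ (x + y) (by linarith)]
    have h2 := Bl_tail hp hδ hμ hh hν hR0
    have h3 : (Kb p δ μ h / R) ^ p ≤ κ := by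
      calc (Kb p δ μ h / R) ^ p ≤ (κ ^ (1 / p)) ^ p := by
            gcongr
            rw [hR, div_div_eq_mul_div, div_le_iff₀ (by positivity)]
            have : 0 ≤ κ ^ (1 / p) := by positivity
            nlinarith
        _ = κ := by
          rw [← Real.rpow_mul hκ0.le, one_div, inv_mul_cancel₀ hp0.ne', Real.rpow_one]
    have h4 : M * κ ≤ ε / 2 := by
      rw [hκ, mul_div_assoc', div_le_iff₀ (by positivity)]
      nlinarith
    nlinarith
  refine ⟨R₀ + R, fun x hx => ⟨?_, ?_⟩⟩
  · have := main x hx _ (mu_mem_Bl hp hδ hμ hh)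
    simpa [TT] using (abs_le.1 this).1
  · exact SS_le hp hδ hμ hh fun ν hν _ => (abs_le.1 (main x hx ν hν)).2

end

section
variable {d : ℕ} {p δ : ℝ} {μ : ℝ → Measure (Ed d)}

lemma IT_Gd (hp : 1 < p) (hδ : 0 ≤ δ) (hμ : IsConvSemigroup p μ) {g : Ed d → ℝ} (hg : Gd g)
    {h : ℝ} (hh : 0 ≤ h) (k : ℕ) : Gd ((SS p δ μ h)^[k] g) := by
  induction k with
  | zero => exact hg
  | succ k ih => rw [Function.iterate_succ_apply']; exact Gd_SS hp hδ hμ ih hh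

lemma IT_mono (hp : 1 < p) (hδ : 0 ≤ δ) (hμ : IsConvSemigroup p μ) {g₁ g₂ : Ed d → ℝ}
    (h1 : Gd g₁) (h2 : Gd g₂) {h : ℝ} (hh : 0 ≤ h) {c : ℝ} (H : ∀ x, g₁ x ≤ g₂ x + c) (k : ℕ)
    (x : Ed d) : (SS p δ μ h)^[k] g₁ x ≤ (SS p δ μ h)^[k] g₂ x + c := by
  induction k generalizing x with
  | zero => exact H x
  | succ k ih =>
    rw [Function.iterate_succ_apply', Function.iterate_succ_apply']
    exact SS_mono hp hδ hμ (IT_Gd hp hδ hμ h1 hh k) (IT_Gd hp hδ hμ h2 hh k) hh ih x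

lemma IT_shift (hp : 1 < p) (hδ : 0 ≤ δ) (hμ : IsConvSemigroup p μ) {g : Ed d → ℝ}
    (hg : Gd g) {h : ℝ} (hh : 0 ≤ h) {r c : ℝ} (H : ∀ x z, dist x z < r → g x ≤ g z + c) (k : ℕ)
    (x z : Ed d) (hxz : dist x z < r) :
    (SS p δ μ h)^[k] g x ≤ (SS p δ μ h)^[k] g z + c := by
  induction k generalizing x z with
  | zero => exact H x z hxz
  | succ k ih =>
    rw [Function.iterate_succ_apply']
    exact SS_shift hp hδ hμ (IT_Gd hp hδ hμ hg hh k) hh ih x z hxz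

lemma IT_le_SS (hp : 1 < p) (hδ : 0 ≤ δ) (hμ : IsConvSemigroup p μ) {g : Ed d → ℝ}
    (hg : Gd g) {h r : ℝ} (hh : 0 ≤ h) (hr : 0 ≤ r) (k : ℕ) (x : Ed d) :
    (SS p δ μ h)^[k] (SS p δ μ r g) x ≤ SS p δ μ (k * h + r) g x := by
  induction k generalizing x with
  | zero => simp
  | succ k ih =>
    rw [Function.iterate_succ_apply']
    have e : ((k + 1 : ℕ) : ℝ) * h + r = h + (k * h + r) := by push_cast; ring
    rw [e]
    refine le_trans ?_ (SS_super hp hδ hμ hg hh (by positivity) x)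
    have := SS_mono hp hδ hμ (c := 0) (IT_Gd hp hδ hμ (Gd_SS hp hδ hμ hg hr) hh k)
      (Gd_SS hp hδ hμ hg (show 0 ≤ k * h + r by positivity)) hh (fun x => by simpa using ih x) x
    simpa using this

lemma TT_le_IT (hp : 1 < p) (hμ : IsConvSemigroup p μ) {g : Ed d → ℝ}
    (hg : Gd g) {h r : ℝ} (hh : 0 ≤ h) (hr : 0 ≤ r) (k : ℕ) {w : Ed d} (hw : ‖w‖ ≤ δ) (x : Ed d) :
    TT μ w (k * h + r) g x ≤ (SS p δ μ h)^[k] (SS p δ μ r g) x := by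
  have hδ : 0 ≤ δ := (norm_nonneg _).trans hw
  induction k generalizing x with
  | zero => simpa using TT_le_SS hp hμ hg hr hw x
  | succ k ih =>
    rw [Function.iterate_succ_apply']
    have e : ((k + 1 : ℕ) : ℝ) * h + r = h + (k * h + r) := by push_cast; ring
    rw [e, TT_add hμ hg hh (by positivity)]
    have hG := IT_Gd hp hδ hμ (Gd_SS hp hδ hμ hg hr) hh k
    refine le_trans ?_ (TT_le_SS hp hμ hG hh hw x)
    have := TT_mono hμ (c := 0) (w := w) (Gd_TT hμ hg (show 0 ≤ k * h + r by positivity) (w := w))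
      hG hh (fun x => by simpa using ih x) x
    simpa using this

end


section
variable {d : ℕ} {p δ : ℝ} {μ : ℝ → Measure (Ed d)}

/-- dyadic step size -/
def hn (n : ℕ) : ℝ := ((2:ℝ) ^ n)⁻¹
/-- number of full steps -/
def Kn (n : ℕ) (t : ℝ) : ℕ := ⌊(2:ℝ)^n * t⌋₊
/-- remaining step -/
def Rn (n : ℕ) (t : ℝ) : ℝ := t - Kn n t * hn n

lemma hn_pos (n : ℕ) : 0 < hn n := by unfold hn; positivity

lemma hn_mul (n : ℕ) : (2:ℝ)^n * hn n = 1 := by unfold hn; field_simp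

lemma hn_tendsto : Tendsto hn atTop (𝓝 0) := by
  have : hn = fun n => ((1:ℝ) / 2) ^ n := by ext n; simp [hn]
  rw [this]
  exact tendsto_pow_atTop_nhds_zero_of_lt_one (by norm_num) (by norm_num)

lemma Rn_nonneg (n : ℕ) {t : ℝ} (ht : 0 ≤ t) : 0 ≤ Rn n t := by
  have h1 : (Kn n t : ℝ) ≤ 2 ^ n * t := Nat.floor_le (by positivity)
  have h2 := hn_mul n
  have h3 := hn_pos n
  have : (Kn n t : ℝ) * hn n ≤ (2 ^ n * t) * hn n := by gcongr
  unfold Rn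
  have e : (2 ^ n * t) * hn n = t * (2 ^ n * hn n) := by ring
  rw [e, h2] at this
  linarith

lemma Rn_le (n : ℕ) (t : ℝ) : Rn n t ≤ hn n := by
  have h1 : 2 ^ n * t < (Kn n t : ℝ) + 1 := Nat.lt_floor_add_one _
  have h2 := hn_mul n
  have h3 := hn_pos n
  have : (2 ^ n * t) * hn n ≤ (Kn n t + 1 : ℝ) * hn n := by gcongr
  unfold Rn
  have e : (2 ^ n * t) * hn n = t * (2 ^ n * hn n) := by ring
  rw [e, h2] at this
  linarith

lemma Kn_Rn (n : ℕ) (t : ℝ) : Kn n t * hn n + Rn n t = t := by unfold Rn; ring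

lemma SI_eq (n : ℕ) (t : ℝ) (f : Ed d → ℝ) :
    SiterND p δ μ n t f = (SS p δ μ (hn n))^[Kn n t] (SS p δ μ (Rn n t) f) := rfl

lemma SI_Gd (hp : 1 < p) (hδ : 0 ≤ δ) (hμ : IsConvSemigroup p μ) {f : Ed d → ℝ} (hf : Gd f)
    (n : ℕ) {t : ℝ} (ht : 0 ≤ t) : Gd (SiterND p δ μ n t f) := by
  rw [SI_eq]
  exact IT_Gd hp hδ hμ (Gd_SS hp hδ hμ hf (Rn_nonneg n ht)) (hn_pos n).le _

lemma SI_shift (hp : 1 < p) (hδ : 0 ≤ δ) (hμ : IsConvSemigroup p μ) {f : Ed d → ℝ} (hf : Gd f)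
    (n : ℕ) {t : ℝ} (ht : 0 ≤ t) {r c : ℝ} (H : ∀ x z, dist x z < r → f x ≤ f z + c)
    (x z : Ed d) (hxz : dist x z < r) :
    SiterND p δ μ n t f x ≤ SiterND p δ μ n t f z + c := by
  rw [SI_eq]
  exact IT_shift hp hδ hμ (Gd_SS hp hδ hμ hf (Rn_nonneg n ht)) (hn_pos n).le
    (SS_shift hp hδ hμ hf (Rn_nonneg n ht) H) _ x z hxz

lemma SI_le (hp : 1 < p) (hδ : 0 ≤ δ) (hμ : IsConvSemigroup p μ) {f : Ed d → ℝ} (hf : Gd f)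
    (n : ℕ) {t : ℝ} (ht : 0 ≤ t) (x : Ed d) :
    SiterND p δ μ n t f x ≤ SS p δ μ t f x := by
  have := IT_le_SS hp hδ hμ hf (hn_pos n).le (Rn_nonneg n ht) (Kn n t) x
  rwa [Kn_Rn] at this

lemma le_SI (hp : 1 < p) (hδ : 0 ≤ δ) (hμ : IsConvSemigroup p μ) {f : Ed d → ℝ} (hf : Gd f)
    (n : ℕ) {t : ℝ} (ht : 0 ≤ t) (x : Ed d) :
    TT μ 0 t f x ≤ SiterND p δ μ n t f x := by
  have := TT_le_IT hp hμ hf (hn_pos n).le (Rn_nonneg n ht) (Kn n t) (w := (0 : Ed d)) (δ := δ)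
    (by simpa using hδ) x
  rwa [Kn_Rn] at this

lemma IT_double (hp : 1 < p) (hδ : 0 ≤ δ) (hμ : IsConvSemigroup p μ) {g : Ed d → ℝ} (hg : Gd g)
    {h : ℝ} (hh : 0 ≤ h) (k : ℕ) (x : Ed d) :
    (SS p δ μ h)^[2 * k] g x ≤ (SS p δ μ (h + h))^[k] g x := by
  induction k generalizing x with
  | zero => simp
  | succ k ih =>
    have e : 2 * (k + 1) = 2 * k + 1 + 1 := by ring
    rw [e, Function.iterate_succ_apply', Function.iterate_succ_apply',
      Function.iterate_succ_apply']
    refine (SS_super hp hδ hμ (IT_Gd hp hδ hμ hg hh (2 * k)) hh hh x).trans ?_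
    have := SS_mono hp hδ hμ (c := 0) (h := h + h) (IT_Gd hp hδ hμ hg hh (2 * k))
      (IT_Gd hp hδ hμ hg (show 0 ≤ h + h by positivity) k) (by positivity)
      (fun x => by simpa using ih x) x
    simpa using this

lemma SI_succ_le (hp : 1 < p) (hδ : 0 ≤ δ) (hμ : IsConvSemigroup p μ) {f : Ed d → ℝ} (hf : Gd f)
    (n : ℕ) {t : ℝ} (ht : 0 ≤ t) (x : Ed d) :
    SiterND p δ μ (n + 1) t f x ≤ SiterND p δ μ n t f x := by
  have hh := (hn_pos (n + 1)).le
  have e2 : hn n = hn (n + 1) + hn (n + 1) := by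
    unfold hn; rw [pow_succ]; field_simp; norm_num
  have h1 : (Kn n t : ℝ) ≤ 2 ^ n * t := Nat.floor_le (by positivity)
  have h1' : 2 ^ n * t < (Kn n t : ℝ) + 1 := Nat.lt_floor_add_one _
  have h2 : (Kn (n + 1) t : ℝ) ≤ 2 ^ (n + 1) * t := Nat.floor_le (by positivity)
  have h2' : 2 ^ (n + 1) * t < (Kn (n + 1) t : ℝ) + 1 := Nat.lt_floor_add_one _
  rw [pow_succ] at h2 h2'
  have h3 : Kn (n + 1) t < 2 * Kn n t + 2 := by
    have : (Kn (n + 1) t : ℝ) < 2 * Kn n t + 2 := by linarith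
    exact_mod_cast this
  have h4 : 2 * Kn n t < Kn (n + 1) t + 1 := by
    have : 2 * (Kn n t : ℝ) < Kn (n + 1) t + 1 := by linarith
    exact_mod_cast this
  have hcase : Kn (n + 1) t = 2 * Kn n t ∨ Kn (n + 1) t = 2 * Kn n t + 1 := by omega
  rw [SI_eq, SI_eq]
  rcases hcase with hc | hc
  · have hR : Rn (n + 1) t = Rn n t := by
      unfold Rn; rw [hc, e2]; push_cast; ring
    rw [hR, hc, e2]
    exact IT_double hp hδ hμ (Gd_SS hp hδ hμ hf (Rn_nonneg n ht)) hh _ x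
  · have hR : Rn n t = hn (n + 1) + Rn (n + 1) t := by
      unfold Rn; rw [hc, e2]; push_cast; ring
    have hR0 := Rn_nonneg (n + 1) ht
    have hG := Gd_SS hp hδ hμ hf hR0
    rw [hc, Function.iterate_succ_apply, hR, e2]
    refine (IT_double hp hδ hμ (Gd_SS hp hδ hμ hG hh) hh _ x).trans ?_
    have := IT_mono hp hδ hμ (c := 0) (h := hn (n + 1) + hn (n + 1)) (Gd_SS hp hδ hμ hG hh)
      (Gd_SS hp hδ hμ hf (show 0 ≤ hn (n + 1) + Rn (n + 1) t by positivity)) (by positivity)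
      (fun x => by simpa using SS_super hp hδ hμ hf hh hR0 x) (Kn n t) x
    simpa using this

lemma SI_anti (hp : 1 < p) (hδ : 0 ≤ δ) (hμ : IsConvSemigroup p μ) {f : Ed d → ℝ} (hf : Gd f)
    {t : ℝ} (ht : 0 ≤ t) (x : Ed d) : Antitone fun n => SiterND p δ μ n t f x :=
  antitone_nat_of_succ_le fun n => SI_succ_le hp hδ hμ hf n ht x

lemma SI_step (f : Ed d → ℝ) {m n : ℕ} (hmn : m ≤ n) {t : ℝ} (ht : 0 ≤ t) :
    SiterND p δ μ n (t + hn m) f = (SS p δ μ (hn n))^[2 ^ (n - m)] (SiterND p δ μ n t f) := by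
  have hK : Kn n (t + hn m) = 2 ^ (n - m) + Kn n t := by
    unfold Kn
    have : (2:ℝ) ^ n * (t + hn m) = 2 ^ n * t + ((2 ^ (n - m) : ℕ) : ℝ) := by
      have e : (2:ℝ) ^ n = 2 ^ (n - m) * 2 ^ m := by rw [← pow_add]; congr 1; omega
      rw [mul_add]; congr 1
      rw [e, mul_assoc, hn_mul]; push_cast; ring
    rw [this, Nat.floor_add_natCast (by positivity)]; ring
  have e : ((2:ℝ) ^ (n - m)) * hn n = hn m := by
    have e : (2:ℝ) ^ n = 2 ^ (n - m) * 2 ^ m := by rw [← pow_add]; congr 1; omega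
    unfold hn; rw [e]; field_simp
  have hR : Rn n (t + hn m) = Rn n t := by
    unfold Rn
    rw [hK]; push_cast
    rw [add_mul, e]; ring
  rw [SI_eq, SI_eq, hK, hR, Function.iterate_add_apply]

lemma two_pow_hn {m n : ℕ} (hmn : m ≤ n) : ((2 ^ (n - m) : ℕ):ℝ) * hn n + 0 = hn m := by
  have e : (2:ℝ) ^ n = 2 ^ (n - m) * 2 ^ m := by rw [← pow_add]; congr 1; omega
  unfold hn; rw [e]; push_cast; field_simp; simp

lemma SI_time (hp : 1 < p) (hδ : 0 ≤ δ) (hμ : IsConvSemigroup p μ)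
    (hμ0 : WContinuousAtZero p μ) {f : Ed d → ℝ} (hf : Gd f) {ε : ℝ} (hε : 0 < ε) :
    ∃ τ > 0, ∀ n s t, 0 ≤ s → s ≤ t → t - s ≤ τ → hn n ≤ τ → ∀ x,
      |SiterND p δ μ n t f x - SiterND p δ μ n s f x| ≤ ε := by
  obtain ⟨τ, hτ, H⟩ := strong_cont_SS hp hδ hμ hμ0 hf (show 0 < ε / 2 by positivity)
  refine ⟨τ / 2, by positivity, fun n s t hs hst hts hnτ x => ?_⟩
  have ht : 0 ≤ t := hs.trans hst
  have hh := (hn_pos n).le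
  have hK : Kn n s ≤ Kn n t := Nat.floor_mono (by gcongr)
  obtain ⟨j, hj⟩ := Nat.exists_eq_add_of_le hK
  have hRt := Rn_nonneg n ht
  have hRs := Rn_nonneg n hs
  have hsum : j * hn n + Rn n t = t - s + Rn n s := by
    have h1 := Kn_Rn n t
    have h2 := Kn_Rn n s
    rw [hj] at h1; push_cast at h1
    linarith
  have hle : j * hn n + Rn n t ≤ τ := by rw [hsum]; linarith [Rn_le n s]
  set G₁ := (SS p δ μ (hn n))^[j] (SS p δ μ (Rn n t) f) with hG₁
  set G₂ := SS p δ μ (Rn n s) f with hG₂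
  have g1 : Gd G₁ := IT_Gd hp hδ hμ (Gd_SS hp hδ hμ hf hRt) hh j
  have g2 : Gd G₂ := Gd_SS hp hδ hμ hf hRs
  have b1 : ∀ x, |G₁ x - f x| ≤ ε / 2 := fun x => by
    have h1 := IT_le_SS hp hδ hμ hf hh hRt j x
    have h2 := TT_le_IT hp hμ hf hh hRt j (w := (0 : Ed d)) (δ := δ) (by simpa using hδ) x
    have h3 := H (j * hn n + Rn n t) (by positivity) hle x
    rw [abs_le]; constructor <;> linarith
  have b2 : ∀ x, |G₂ x - f x| ≤ ε / 2 := fun x => by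
    have h2 := TT_le_SS hp hμ hf hRs (w := (0 : Ed d)) (δ := δ) (by simpa using hδ) x
    have h3 := H (Rn n s) hRs (by linarith [Rn_le n s]) x
    rw [abs_le]; constructor <;> linarith
  have e1 : SiterND p δ μ n t f = (SS p δ μ (hn n))^[Kn n s] G₁ := by
    rw [SI_eq, hj, Function.iterate_add_apply]
  rw [e1, SI_eq]
  have c1 := IT_mono hp hδ hμ g1 g2 hh (c := ε) (fun x => by
    have := abs_le.1 (b1 x); have := abs_le.1 (b2 x); linarith) (Kn n s) x
  have c2 := IT_mono hp hδ hμ g2 g1 hh (c := ε) (fun x => by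
    have := abs_le.1 (b1 x); have := abs_le.1 (b2 x); linarith) (Kn n s) x
  rw [abs_le]; constructor <;> linarith

end


section
variable {d : ℕ} {p δ : ℝ} {μ : ℝ → Measure (Ed d)}

lemma SI_bddBelow (hp : 1 < p) (hδ : 0 ≤ δ) (hμ : IsConvSemigroup p μ) {f : Ed d → ℝ} (hf : Gd f)
    {t : ℝ} (ht : 0 ≤ t) (x : Ed d) : BddBelow (range fun n => SiterND p δ μ n t f x) := by
  refine ⟨TT μ 0 t f x, ?_⟩
  rintro _ ⟨n, rfl⟩
  exact le_SI hp hδ hμ hf n ht x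

lemma U_le_SI (hp : 1 < p) (hδ : 0 ≤ δ) (hμ : IsConvSemigroup p μ) {f : Ed d → ℝ} (hf : Gd f)
    {t : ℝ} (ht : 0 ≤ t) (n : ℕ) (x : Ed d) : SlimD p δ μ t f x ≤ SiterND p δ μ n t f x :=
  ciInf_le (SI_bddBelow hp hδ hμ hf ht x) n

lemma U_tendsto (hp : 1 < p) (hδ : 0 ≤ δ) (hμ : IsConvSemigroup p μ) {f : Ed d → ℝ} (hf : Gd f)
    {t : ℝ} (ht : 0 ≤ t) (x : Ed d) :
    Tendsto (fun n => SiterND p δ μ n t f x) atTop (𝓝 (SlimD p δ μ t f x)) :=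
  tendsto_atTop_ciInf (SI_anti hp hδ hμ hf ht x) (SI_bddBelow hp hδ hμ hf ht x)

lemma U_le (hp : 1 < p) (hδ : 0 ≤ δ) (hμ : IsConvSemigroup p μ) {f : Ed d → ℝ} (hf : Gd f)
    {t : ℝ} (ht : 0 ≤ t) (x : Ed d) : SlimD p δ μ t f x ≤ SS p δ μ t f x :=
  (U_le_SI hp hδ hμ hf ht 0 x).trans (SI_le hp hδ hμ hf 0 ht x)

lemma le_U (hp : 1 < p) (hδ : 0 ≤ δ) (hμ : IsConvSemigroup p μ) {f : Ed d → ℝ} (hf : Gd f)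
    {t : ℝ} (ht : 0 ≤ t) (x : Ed d) : TT μ 0 t f x ≤ SlimD p δ μ t f x :=
  le_ciInf fun n => le_SI hp hδ hμ hf n ht x

lemma U_Gd (hp : 1 < p) (hδ : 0 ≤ δ) (hμ : IsConvSemigroup p μ) {f : Ed d → ℝ} (hf : Gd f)
    {t : ℝ} (ht : 0 ≤ t) : Gd (SlimD p δ μ t f) := by
  refine Gd.of_modulus ?_ fun ε hε => ?_
  · obtain ⟨M₁, h1⟩ := (Gd_SS hp hδ hμ hf ht).bdd
    obtain ⟨M₂, h2⟩ := (Gd_TT hμ hf ht (w := 0)).bdd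
    refine ⟨max M₁ M₂, fun x => ?_⟩
    have a1 := abs_le.1 (h1 x)
    have a2 := abs_le.1 (h2 x)
    have := U_le hp hδ hμ hf ht x
    have := le_U hp hδ hμ hf ht x
    have := le_max_left M₁ M₂
    have := le_max_right M₁ M₂
    rw [abs_le]; constructor <;> linarith
  · obtain ⟨r, hr, H⟩ := hf.modulus hε
    refine ⟨r, hr, fun x z hxz => ?_⟩
    rw [← sub_le_iff_le_add]
    refine le_ciInf fun n => ?_
    have := SI_shift hp hδ hμ hf n ht H x z hxz
    linarith [U_le_SI hp hδ hμ hf ht n x]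

lemma U_vanish (hp : 1 < p) (hδ : 0 ≤ δ) (hμ : IsConvSemigroup p μ) {f : Ed d → ℝ} (hf : Gd f)
    (hv : Tendsto f (cocompact (Ed d)) (𝓝 0)) {t : ℝ} (ht : 0 ≤ t) :
    Tendsto (SlimD p δ μ t f) (cocompact (Ed d)) (𝓝 0) := by
  rw [Metric.tendsto_nhds]
  intro ε hε
  obtain ⟨R, hR⟩ := vanish hp hδ hμ hf hv ht (show 0 < ε / 2 by positivity)
  have : ∀ᶠ x in cocompact (Ed d), R < ‖x‖ :=
    (tendsto_norm_cocompact_atTop).eventually (eventually_gt_atTop R)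
  filter_upwards [this] with x hx
  have h1 := hR x hx
  have h2 := U_le hp hδ hμ hf ht x
  have h3 := le_U hp hδ hμ hf ht x
  rw [Real.dist_eq, sub_zero, abs_lt]; constructor <;> linarith

lemma U_zero (hp : 1 < p) (hδ : 0 ≤ δ) (hμ : IsConvSemigroup p μ) (hμ0 : WContinuousAtZero p μ)
    {f : Ed d → ℝ} (hf : Gd f) (x : Ed d) : SlimD p δ μ 0 f x = f x := by
  apply le_antisymm
  · have := U_le hp hδ hμ hf le_rfl x
    rwa [SS_zero hp hδ hμ hμ0 hf] at this
  · refine le_trans (le_of_eq ?_) (le_U hp hδ hμ hf le_rfl x)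
    simp [TT, hμ.1]

lemma U_time (hp : 1 < p) (hδ : 0 ≤ δ) (hμ : IsConvSemigroup p μ)
    (hμ0 : WContinuousAtZero p μ) {f : Ed d → ℝ} (hf : Gd f) {ε : ℝ} (hε : 0 < ε) :
    ∃ τ > 0, ∀ s t, 0 ≤ s → s ≤ t → t - s ≤ τ → ∀ x,
      |SlimD p δ μ t f x - SlimD p δ μ s f x| ≤ ε := by
  obtain ⟨τ, hτ, H⟩ := SI_time hp hδ hμ hμ0 hf hε
  refine ⟨τ, hτ, fun s t hs hst hts x => ?_⟩
  refine le_of_tendsto ((U_tendsto hp hδ hμ hf (hs.trans hst) x).sub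
    (U_tendsto hp hδ hμ hf hs x)).abs ?_
  filter_upwards [hn_tendsto.eventually (gt_mem_nhds hτ)] with n hn'
  exact H n s t hs hst hts hn'.le x

lemma U_step_lower (hp : 1 < p) (hδ : 0 ≤ δ) (hμ : IsConvSemigroup p μ)
    (hμ0 : WContinuousAtZero p μ) {f : Ed d → ℝ} (hf : Gd f) {t : ℝ} (ht : 0 ≤ t) (m : ℕ)
    {w : Ed d} (hw : ‖w‖ ≤ δ) (x : Ed d) :
    TT μ w (hn m) (SlimD p δ μ t f) x ≤ SlimD p δ μ (t + hn m) f x := by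
  have hm := (hn_pos m).le
  refine ge_of_tendsto (U_tendsto hp hδ hμ hf (show 0 ≤ t + hn m by positivity) x) ?_
  filter_upwards [eventually_ge_atTop m] with n hmn
  have hG := SI_Gd hp hδ hμ hf n ht
  rw [SI_step f hmn ht]
  have h1 := TT_le_IT hp hμ hG (hn_pos n).le le_rfl (2 ^ (n - m)) hw x
  rw [SS_zero hp hδ hμ hμ0 hG, two_pow_hn hmn] at h1
  refine le_trans ?_ h1
  have := TT_mono hμ (c := 0) (w := w) (U_Gd hp hδ hμ hf ht) hG hm
    (fun x => by simpa using U_le_SI hp hδ hμ hf ht n x) x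
  simpa using this

lemma U_dini (hp : 1 < p) (hδ : 0 ≤ δ) (hμ : IsConvSemigroup p μ) {f : Ed d → ℝ} (hf : Gd f)
    (hv : Tendsto f (cocompact (Ed d)) (𝓝 0)) {t : ℝ} (ht : 0 ≤ t) {ε : ℝ} (hε : 0 < ε) :
    ∀ᶠ n in atTop, ∀ x, SiterND p δ μ n t f x ≤ SlimD p δ μ t f x + ε := by
  obtain ⟨R, hR⟩ := vanish hp hδ hμ hf hv ht (show 0 < ε / 2 by positivity)
  have hD := Antitone.tendstoUniformlyOn_of_forall_tendsto
    (F := fun n => SiterND p δ μ n t f) (f := SlimD p δ μ t f)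
    (isCompact_closedBall (0 : Ed d) R)
    (fun n => (SI_Gd hp hδ hμ hf n ht).uc.continuous.continuousOn)
    (fun x _ => SI_anti hp hδ hμ hf ht x)
    (U_Gd hp hδ hμ hf ht).uc.continuous.continuousOn
    (fun x _ => U_tendsto hp hδ hμ hf ht x)
  rw [Metric.tendstoUniformlyOn_iff] at hD
  filter_upwards [hD ε hε] with n hn' x
  by_cases hx : R < ‖x‖
  · have h1 := hR x hx
    have h2 := SI_le hp hδ hμ hf n ht x
    have h3 := le_U hp hδ hμ hf ht x
    linarith
  · have := hn' x (by simpa using not_lt.1 hx)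
    rw [Real.dist_eq, abs_lt] at this
    linarith

lemma U_step_upper (hp : 1 < p) (hδ : 0 ≤ δ) (hμ : IsConvSemigroup p μ)
    (hμ0 : WContinuousAtZero p μ) {f : Ed d → ℝ} (hf : Gd f)
    (hv : Tendsto f (cocompact (Ed d)) (𝓝 0)) {t : ℝ} (ht : 0 ≤ t) (m : ℕ) (x : Ed d) :
    SlimD p δ μ (t + hn m) f x ≤ SS p δ μ (hn m) (SlimD p δ μ t f) x := by
  have hm := (hn_pos m).le
  refine le_of_forall_pos_le_add fun ε hε => ?_
  obtain ⟨n, hmn, hn'⟩ := ((eventually_ge_atTop m).and (U_dini hp hδ hμ hf hv ht hε)).exists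
  have hG := SI_Gd hp hδ hμ hf n ht
  refine (U_le_SI hp hδ hμ hf (show 0 ≤ t + hn m by positivity) n x).trans ?_
  rw [SI_step f hmn ht]
  have h1 := IT_le_SS hp hδ hμ hG (hn_pos n).le le_rfl (2 ^ (n - m)) x
  rw [SS_zero hp hδ hμ hμ0 hG, two_pow_hn hmn] at h1
  exact h1.trans (SS_mono hp hδ hμ hG (U_Gd hp hδ hμ hf ht) hm hn' x)

end


section P7
variable {d : ℕ} {p δ : ℝ} {μ : ℝ → Measure (Ed d)}

lemma int_sp (hp : 1 < p) {γ : Measure (Ed d × Ed d)} {a : ℝ} (ha : 0 < a)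
    (h : cst p γ ≤ ENNReal.ofReal a) :
    Integrable (fun q : Ed d × Ed d => (‖q.2 - q.1‖ / a) ^ p) γ ∧
      ∫ q, (‖q.2 - q.1‖ / a) ^ p ∂γ ≤ 1 := by
  have hp0 : 0 < p := by linarith
  obtain ⟨h1, h2, h3, h4⟩ := pP_facts hp
  have hm : MemLp (fun q : Ed d × Ed d => q.2 - q.1) (ENNReal.ofReal p) γ :=
    ⟨by fun_prop, h.trans_lt ENNReal.ofReal_lt_top⟩
  have hi : Integrable (fun q : Ed d × Ed d => ‖q.2 - q.1‖ ^ p) γ := by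
    have := hm.integrable_norm_rpow h2 h3
    rwa [h4] at this
  have hle : ∫⁻ q : Ed d × Ed d, (‖q.2 - q.1‖₊ : ℝ≥0∞) ^ p ∂γ ≤ ENNReal.ofReal (a ^ p) := by
    unfold cst at h
    rw [eLp_eq hp] at h
    have h5 := ENNReal.rpow_le_rpow h hp0.le
    rwa [← ENNReal.rpow_mul, one_div, inv_mul_cancel₀ hp0.ne', ENNReal.rpow_one,
      ENNReal.ofReal_rpow_of_nonneg ha.le hp0.le] at h5
  have hInteg : ∫ q : Ed d × Ed d, ‖q.2 - q.1‖ ^ p ∂γ ≤ a ^ p := by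
    rw [integral_eq_lintegral_of_nonneg_ae (ae_of_all _ fun q => by positivity)
      hi.aestronglyMeasurable]
    refine ENNReal.toReal_le_of_le_ofReal (by positivity) (le_trans (le_of_eq ?_) hle)
    refine lintegral_congr fun q => ?_
    rw [← ENNReal.ofReal_rpow_of_nonneg (norm_nonneg _) hp0.le, ofReal_norm]
    rfl
  have he : (fun q : Ed d × Ed d => (‖q.2 - q.1‖ / a) ^ p)
      = fun q : Ed d × Ed d => ‖q.2 - q.1‖ ^ p / a ^ p := by
    ext q; rw [Real.div_rpow (norm_nonneg _) ha.le]
  rw [he]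
  refine ⟨hi.div_const _, ?_⟩
  rw [integral_div, div_le_one (by positivity)]
  exact hInteg

lemma young1 (hp : 1 < p) {s : ℝ} (hs : 0 ≤ s) : s ≤ (1 - 1 / p) + s ^ p / p := by
  have hp0 : 0 < p := by linarith
  have := one_add_mul_self_le_rpow_one_add (s := s - 1) (by linarith) hp.le
  rw [show 1 + (s - 1) = s by ring] at this
  have h2 : (1 + p * (s - 1)) / p ≤ s ^ p / p := by gcongr
  have h3 : (1 + p * (s - 1)) / p = 1 / p + (s - 1) := by field_simp
  linarith

lemma young2 (hp : 1 < p) {s T lam : ℝ} (hs : 0 ≤ s) (hT : 0 < T) (hl : T ^ (1 - p) ≤ lam) :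
    s ≤ lam * s ^ p + T := by
  have hl0 : 0 < lam := lt_of_lt_of_le (by positivity) hl
  rcases le_or_gt s T with h | h
  · have : 0 ≤ lam * s ^ p := by positivity
    linarith
  · have hs0 : 0 < s := hT.trans h
    have h1 : s ^ (1 - p) ≤ T ^ (1 - p) := Real.rpow_le_rpow_of_nonpos hT h.le (by linarith)
    have h2 : s ^ (1 - p) * s ^ p = s := by
      rw [← Real.rpow_add hs0]; simp
    have h3 : s ^ (1 - p) * s ^ p ≤ lam * s ^ p := by
      gcongr; exact h1.trans hl
    linarith

lemma norm_grad (g : Ed d → ℝ) (x : Ed d) : ‖gradient g x‖ = ‖fderiv ℝ g x‖ := by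
  unfold gradient; simp

lemma C01_cont {g : Ed d → ℝ} (hg : IsC01 g) : Continuous (fun x => ‖gradient g x‖) := by
  simp_rw [norm_grad]
  exact (hg.2.1.continuous_fderiv (by simp)).norm

lemma C01_bdd {g : Ed d → ℝ} (hg : IsC01 g) : ∃ L > 0, ∀ x, ‖gradient g x‖ ≤ L := by
  have h1 : Tendsto (fun x => ‖gradient g x‖) (cocompact (Ed d)) (𝓝 0) := by
    simpa using hg.2.2.norm
  have h2 := h1.eventually (gt_mem_nhds (show (0:ℝ) < 1 by norm_num))
  rw [Filter.Eventually, mem_cocompact] at h2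
  obtain ⟨K, hK, h2⟩ := h2
  obtain ⟨C, hC⟩ := hK.exists_bound_of_continuousOn (C01_cont hg).continuousOn
  refine ⟨max C 1, by positivity, fun x => ?_⟩
  by_cases hx : x ∈ K
  · have := hC x hx
    rw [norm_norm] at this
    exact this.trans (le_max_left _ _)
  · exact (le_of_lt (h2 hx)).trans (le_max_right _ _)

lemma mv_bound {g : Ed d → ℝ} (hg : IsC01 g) {s : Set (Ed d)} (hs : Convex ℝ s) {C : ℝ}
    (hC : ∀ z ∈ s, ‖gradient g z‖ ≤ C) {y z : Ed d} (hy : y ∈ s) (hz : z ∈ s) :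
    g z - g y ≤ C * ‖z - y‖ := by
  have := hs.norm_image_sub_le_of_norm_fderiv_le (𝕜 := ℝ) (f := g)
    (fun w _ => (hg.2.1.differentiable (by simp)).differentiableAt)
    (fun w hw => (norm_grad g w) ▸ hC w hw) hy hz
  exact (le_abs_self _).trans this

lemma grad_lemma (hp : 1 < p) (hδ : 0 ≤ δ) (hμ : IsConvSemigroup p μ)
    (hμ0 : WContinuousAtZero p μ) {g : Ed d → ℝ} (hg : Gd g) (hg1 : IsC01 g) (x : Ed d)
    {ε : ℝ} (hε : 0 < ε) :
    ∃ τ > 0, ∀ h, 0 < h → h ≤ τ → ∀ ν ∈ Bl p δ μ h,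
      ∫ y, g (x + y) ∂ν ≤ Smu μ h g x + h * (δ * ‖gradient g x‖ + ε) := by
  have hp0 : 0 < p := by linarith
  obtain ⟨L, hL, hLb⟩ := C01_bdd hg1
  set G := ‖gradient g x‖ with hG
  have hG0 : 0 ≤ G := norm_nonneg _
  obtain ⟨θ, hθ, hθ2⟩ : ∃ θ > 0, (δ + θ) * (G + 3 * θ) ≤ δ * G + ε := by
    refine ⟨min 1 (ε / (3 * δ + G + 3)), by positivity, ?_⟩
    set θ := min 1 (ε / (3 * δ + G + 3))
    have h1 : θ ≤ 1 := min_le_left _ _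
    have h2 : θ ≤ ε / (3 * δ + G + 3) := min_le_right _ _
    have h0 : 0 < θ := by positivity
    rw [le_div_iff₀ (by positivity)] at h2
    nlinarith
  obtain ⟨r, hr, hrb⟩ : ∃ r > 0, ∀ z ∈ Metric.ball x r, ‖gradient g z‖ ≤ G + θ := by
    have := (C01_cont hg1).continuousAt (x := x)
    obtain ⟨r, hr, H⟩ := Metric.continuousAt_iff.1 this θ hθ
    refine ⟨r, hr, fun z hz => ?_⟩
    have := H hz
    rw [Real.dist_eq, abs_lt] at this
    linarith
  set lam := θ / L with hlam
  have hlam0 : 0 < lam := by positivity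
  set T := lam ^ (1 / (1 - p)) with hT
  have hT0 : 0 < T := by positivity
  have hTl : T ^ (1 - p) ≤ lam := by
    rw [hT, ← Real.rpow_mul hlam0.le, one_div, inv_mul_cancel₀ (by linarith), Real.rpow_one]
  set η := θ / (L * T) with hη
  have hη0 : 0 < η := by positivity
  obtain ⟨τ, hτ, Htail⟩ := tail_small hp hδ hμ hμ0 (show 0 < r / 2 by positivity)
    (show 0 < η / 2 by positivity)
  refine ⟨τ, hτ, fun h hh hhτ ν hν => ?_⟩
  have hmu := mu_mem_Bl hp hδ hμ hh.le
  have := hν.1.1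
  have := hmu.1.1
  set a := (δ + θ) * h with ha
  have ha0 : 0 < a := by positivity
  obtain ⟨γ, hγ, hc⟩ := coupling_of_Wp hp hmu.1 hν.1 hν.2
    (show δ * h < a by rw [ha]; nlinarith)
  have := coupling_prob hγ
  obtain ⟨hsi, hsb⟩ := int_sp hp ha0 hc
  set A : Set (Ed d × Ed d) := {q | r / 2 < ‖q.1‖} ∪ {q | r / 2 < ‖q.2‖} with hA
  have hAm1 : MeasurableSet {q : Ed d × Ed d | r / 2 < ‖q.1‖} :=
    measurableSet_lt measurable_const measurable_fst.norm
  have hAm2 : MeasurableSet {q : Ed d × Ed d | r / 2 < ‖q.2‖} :=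
    measurableSet_lt measurable_const measurable_snd.norm
  have hAm : MeasurableSet A := hAm1.union hAm2
  have hAγ : γ.real A ≤ η := by
    have e1 : γ.real {q : Ed d × Ed d | r / 2 < ‖q.1‖} = (μ h).real {y | r / 2 < ‖y‖} := by
      rw [← hγ.1, map_measureReal_apply measurable_fst (meas_tail _)]; rfl
    have e2 : γ.real {q : Ed d × Ed d | r / 2 < ‖q.2‖} = ν.real {y | r / 2 < ‖y‖} := by
      rw [← hγ.2, map_measureReal_apply measurable_snd (meas_tail _)]; rfl
    have h1 := Htail h hh.le hhτ ν hν
    have h2 := Htail h hh.le hhτ _ hmu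
    have h3 := measureReal_union_le (μ := γ) {q : Ed d × Ed d | r / 2 < ‖q.1‖}
      {q : Ed d × Ed d | r / 2 < ‖q.2‖}
    rw [e1, e2] at h3
    linarith
  have hcg := hg.uc.continuous
  have i1 : ∫ y, g (x + y) ∂ν = ∫ q, g (x + q.2) ∂γ := by
    rw [← hγ.2, integral_map (by fun_prop) (by fun_prop)]
  have i2 : Smu μ h g x = ∫ q, g (x + q.1) ∂γ := by
    unfold Smu
    rw [← hγ.1, integral_map (by fun_prop) (by fun_prop)]
  obtain ⟨M, hM⟩ := hg.bdd
  have j1 : Integrable (fun q : Ed d × Ed d => g (x + q.2)) γ :=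
    Integrable.of_bound (by fun_prop) M (ae_of_all _ fun y => hM _)
  have j2 : Integrable (fun q : Ed d × Ed d => g (x + q.1)) γ :=
    Integrable.of_bound (by fun_prop) M (ae_of_all _ fun y => hM _)
  have jA : Integrable (A.indicator (fun _ => (1:ℝ))) γ := (integrable_const _).indicator hAm
  have hpt : ∀ q : Ed d × Ed d, g (x + q.2) - g (x + q.1) ≤
      a * (G + θ) * (1 - 1 / p) + (a * (G + θ) / p + a * L * lam) * (‖q.2 - q.1‖ / a) ^ p
        + a * L * T * A.indicator (fun _ => (1:ℝ)) q := by
    intro q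
    set s := ‖q.2 - q.1‖ / a with hs
    have hs0 : 0 ≤ s := by positivity
    have hsa : ‖q.2 - q.1‖ = a * s := by rw [hs]; field_simp
    have hdiff : (x + q.2) - (x + q.1) = q.2 - q.1 := by abel
    have y1 := young1 hp hs0
    have y2 := young2 hp hs0 hT0 hTl
    have hsp : 0 ≤ s ^ p := by positivity
    by_cases hq : q ∈ A
    · rw [Set.indicator_of_mem hq]
      have := mv_bound hg1 convex_univ (fun z _ => hLb z) (mem_univ (x + q.1)) (mem_univ (x + q.2))
      rw [hdiff, hsa] at this
      have h1 : L * a * s ≤ L * a * (lam * s ^ p + T) := by gcongr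
      have h2 : 0 ≤ a * (G + θ) * (1 - 1 / p + s ^ p / p) := by
        have : 0 ≤ 1 - 1 / p + s ^ p / p := hs0.trans y1
        positivity
      have h3 : a * (G + θ) * (1 - 1 / p) + (a * (G + θ) / p + a * L * lam) * s ^ p
        + a * L * T * 1 = a * (G + θ) * (1 - 1 / p + s ^ p / p) + L * a * (lam * s ^ p + T) := by
        ring
      rw [h3]; linarith
    · rw [Set.indicator_of_notMem hq]
      have hq' : ‖q.1‖ ≤ r / 2 ∧ ‖q.2‖ ≤ r / 2 := by
        simpa [hA, not_or] using hq
      have := mv_bound hg1 (convex_ball x r) hrb (y := x + q.1) (z := x + q.2)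
        (by simp; linarith) (by simp; linarith)
      rw [hdiff, hsa] at this
      have h1 : (G + θ) * a * s ≤ (G + θ) * a * (1 - 1 / p + s ^ p / p) := by gcongr
      have h2 : 0 ≤ a * L * lam * s ^ p := by positivity
      have h3 : a * (G + θ) * (1 - 1 / p) + (a * (G + θ) / p + a * L * lam) * s ^ p
        + a * L * T * 0 = (G + θ) * a * (1 - 1 / p + s ^ p / p) + a * L * lam * s ^ p := by
        ring
      rw [h3]; linarith
  have jc : Integrable (fun q : Ed d × Ed d => a * (G + θ) * (1 - 1 / p) +
      (a * (G + θ) / p + a * L * lam) * (‖q.2 - q.1‖ / a) ^ p) γ :=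
    (integrable_const _).add (hsi.const_mul _)
  have hI := integral_mono (j1.sub j2) (jc.add (jA.const_mul (a * L * T))) hpt
  simp only [Pi.add_apply] at hI
  rw [integral_add jc (jA.const_mul _),
    integral_add (integrable_const _) (hsi.const_mul _), integral_const_mul, integral_const_mul, integral_const_mul,
    integral_indicator_const _ hAm] at hI
  simp only [Pi.sub_apply] at hI
  rw [integral_sub j1 j2, ← i1, ← i2] at hI
  simp only [integral_const, probReal_univ, smul_eq_mul, one_mul, mul_one] at hI
  have k1 : (a * (G + θ) / p + a * L * lam) * ∫ q : Ed d × Ed d, (‖q.2 - q.1‖ / a) ^ p ∂γ ≤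
      (a * (G + θ) / p + a * L * lam) * 1 := by gcongr
  have k2 : a * L * T * γ.real A ≤ a * L * T * η := by gcongr
  have k3 : L * lam = θ := by rw [hlam]; field_simp
  have k4 : L * T * η = θ := by rw [hη]; field_simp
  have k5 : a * (G + θ) * (1 - 1 / p) + (a * (G + θ) / p + a * L * lam) * 1 + a * L * T * η
      = a * (G + θ + L * lam + L * T * η) := by ring
  rw [k3, k4] at k5
  have k6 : a * (G + θ + θ + θ) ≤ h * (δ * G + ε) := by
    calc a * (G + θ + θ + θ) = h * ((δ + θ) * (G + 3 * θ)) := by rw [ha]; ring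
      _ ≤ _ := by gcongr
  linarith

end P7


section P8
variable {d : ℕ} {p δ : ℝ} {μ : ℝ → Measure (Ed d)}

lemma C0_abs_le (f : C₀(Ed d, ℝ)) (x : Ed d) : |f x| ≤ ‖f‖ := by
  rw [← ZeroAtInftyContinuousMap.norm_toBCF_eq_norm]
  exact f.toBCF.norm_coe_le_norm x

lemma Gd_C0 (f : C₀(Ed d, ℝ)) : Gd (f : Ed d → ℝ) :=
  ⟨ZeroAtInftyContinuousMap.uniformContinuous f, ‖f‖, C0_abs_le f⟩

lemma hn_small {τ : ℝ} (hτ : 0 < τ) : ∃ m, hn m ≤ τ := by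
  obtain ⟨m, hm⟩ := (hn_tendsto.eventually (gt_mem_nhds hτ)).exists
  exact ⟨m, le_of_lt hm⟩

/-- first order expansion to the left -/
lemma deriv_left {v : ℝ → C₀(Ed d, ℝ)} {v' : C₀(Ed d, ℝ)} {t : ℝ} (hv : HasDerivAt v v' t)
    {ε : ℝ} (hε : 0 < ε) :
    ∃ τ > 0, ∀ h, 0 < h → h ≤ τ → ∀ y, |v (t - h) y - v t y + h * v' y| ≤ ε * h := by
  have := (hasDerivAt_iff_isLittleO_nhds_zero.1 hv).def hε
  obtain ⟨τ, hτ, H⟩ := Metric.eventually_nhds_iff.1 this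
  refine ⟨τ / 2, by positivity, fun h hh hhτ y => ?_⟩
  have h1 := H (y := -h) (by rw [Real.dist_eq, sub_zero, abs_neg, abs_of_pos hh]; linarith)
  rw [norm_neg, Real.norm_eq_abs, abs_of_pos hh] at h1
  have h2 := (C0_abs_le (v (t + -h) - v t - (-h) • v') y).trans h1
  have e : (v (t + -h) - v t - (-h) • v') y = v (t - h) y - v t y + h * v' y := by
    rw [← sub_eq_add_neg]
    show v (t - h) y - v t y - (-h) * v' y = _
    ring
  rwa [e] at h2

lemma gen_exp {g Af : Ed d → ℝ} (hA : HasGenerator μ g Af) {ε : ℝ} (hε : 0 < ε) :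
    ∃ τ > 0, ∀ h, 0 < h → h ≤ τ → ∀ y, |Smu μ h g y - g y - h * Af y| ≤ ε * h := by
  have := Metric.tendstoUniformly_iff.1 hA ε hε
  rw [eventually_nhdsWithin_iff, Metric.eventually_nhds_iff] at this
  obtain ⟨τ, hτ, H⟩ := this
  refine ⟨τ / 2, by positivity, fun h hh hhτ y => ?_⟩
  have h1 := H (y := h) (by rw [Real.dist_eq, sub_zero, abs_of_pos hh]; linarith) hh y
  rw [dist_comm, Real.dist_eq] at h1
  have e : Smu μ h g y - g y - h * Af y = ((Smu μ h g y - g y) / h - Af y) * h := by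
    field_simp
  rw [e, abs_mul, abs_of_pos hh]
  gcongr

lemma TT_zero_eq (h : ℝ) (g : Ed d → ℝ) : TT μ 0 h g = Smu μ h g := by
  ext x; simp [TT, Smu]

lemma TT_eq_Smu (w : Ed d) (h : ℝ) (g : Ed d → ℝ) (x : Ed d) :
    TT μ w h g x = Smu μ h g (x + h • w) := by
  unfold TT Smu
  congr 1; ext y; congr 1; abel

lemma gen_cont (hμ : IsConvSemigroup p μ) {g Af : Ed d → ℝ} (hg : Gd g)
    (hA : HasGenerator μ g Af) : Continuous Af := by
  refine TendstoUniformly.continuous hA (Eventually.frequently ?_)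
  filter_upwards [self_mem_nhdsWithin] with h hh
  have h1 := (Gd_TT hμ hg (le_of_lt hh) (w := 0)).uc.continuous
  rw [TT_zero_eq] at h1
  exact (h1.sub hg.uc.continuous).div_const _

lemma exists_dir (hδ : 0 ≤ δ) (z : Ed d) : ∃ w : Ed d, ‖w‖ ≤ δ ∧ inner ℝ z w = δ * ‖z‖ := by
  by_cases hz : z = 0
  · exact ⟨0, by simpa using hδ, by simp [hz]⟩
  · have hz' : ‖z‖ ≠ 0 := norm_ne_zero_iff.2 hz
    refine ⟨(δ / ‖z‖) • z, ?_, ?_⟩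
    · rw [norm_smul, norm_div, norm_norm, Real.norm_of_nonneg hδ, div_mul_cancel₀ _ hz']
    · rw [inner_smul_right, real_inner_self_eq_norm_sq]
      field_simp

lemma dir_exp {g : Ed d → ℝ} (hg : IsC01 g) (x w : Ed d) {ε : ℝ} (hε : 0 < ε) :
    ∃ τ > 0, ∀ h, 0 < h → h ≤ τ →
      g x + h * (inner ℝ (gradient g x) w) - ε * h ≤ g (x + h • w) := by
  have hd : HasFDerivAt g (fderiv ℝ g x) x :=
    ((hg.2.1.differentiable (by simp)) x).hasFDerivAt
  have hl : HasDerivAt (fun s : ℝ => g (x + s • w)) (fderiv ℝ g x w) 0 := by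
    have h1 : HasDerivAt (fun s : ℝ => x + s • w) w 0 := by
      simpa using ((hasDerivAt_id (0:ℝ)).smul_const w).const_add x
    have h2 : HasFDerivAt g (fderiv ℝ g x) (x + (0:ℝ) • w) := by simpa using hd
    exact h2.comp_hasDerivAt (0:ℝ) h1
  have hi : inner ℝ (gradient g x) w = fderiv ℝ g x w := by
    unfold gradient; simp
  rw [hi]
  have := (hasDerivAt_iff_isLittleO_nhds_zero.1 hl).def hε
  obtain ⟨τ, hτ, H⟩ := Metric.eventually_nhds_iff.1 this
  refine ⟨τ / 2, by positivity, fun h hh hhτ => ?_⟩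
  have h1 := H (y := h) (by rw [Real.dist_eq, sub_zero, abs_of_pos hh]; linarith)
  rw [Real.norm_eq_abs, Real.norm_eq_abs, abs_of_pos hh] at h1
  have h2 := (abs_le.1 h1).1
  simp only [zero_add, zero_smul, add_zero, smul_eq_mul] at h2
  linarith

lemma sub_ineq (hp : 1 < p) (hδ : 0 ≤ δ) (hμ : IsConvSemigroup p μ)
    (hμ0 : WContinuousAtZero p μ) (f : C₀(Ed d, ℝ)) {t : ℝ} (ht : 0 < t) (x : Ed d)
    {v v' : ℝ → C₀(Ed d, ℝ)} (hv : IsTestFunction μ v v')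
    (hle : ∀ s, 0 < s → ∀ y, SlimD p δ μ s f y ≤ v s y) (heq : v t x = SlimD p δ μ t f x)
    {Av : Ed d → ℝ} (hA : HasGenerator μ (v t) Av) :
    v' t x ≤ Av x + δ * ‖gradient (v t) x‖ := by
  refine le_of_forall_pos_le_add fun ε hε => ?_
  obtain ⟨hd, -, hc⟩ := hv t ht
  have he4 : 0 < ε / 4 := by positivity
  obtain ⟨τ1, hτ1, H1⟩ := deriv_left hd he4
  obtain ⟨τ2, hτ2, H2⟩ := gen_exp hA he4
  obtain ⟨τ3, hτ3, H3⟩ := grad_lemma hp hδ hμ hμ0 (Gd_C0 (v t)) hc x he4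
  obtain ⟨τ4, hτ4, H4⟩ := strong_cont hp hδ hμ hμ0 (Gd_C0 (v' t)) he4
  obtain ⟨m, hm⟩ := hn_small (show 0 < min (min τ1 τ2) (min (min τ3 τ4) (t / 2)) by positivity)
  simp only [le_min_iff] at hm
  obtain ⟨⟨m1, m2⟩, ⟨m3, m4⟩, m5⟩ := hm
  set h := hn m with hh
  have hh0 : 0 < h := hn_pos m
  have hth : 0 < t - h := by linarith
  have s1 := U_step_upper hp hδ hμ hμ0 (Gd_C0 f) f.zero_at_infty' hth.le m x
  rw [← hh, sub_add_cancel] at s1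
  have s2 := SS_mono hp hδ hμ (U_Gd hp hδ hμ (Gd_C0 f) hth.le) (Gd_C0 (v (t - h))) hh0.le
    (c := 0) (fun y => by simpa using hle _ hth y) x
  have s3 : SS p δ μ h (v (t - h)) x ≤ v t x + h * (Av x + δ * ‖gradient (v t) x‖ - v' t x + ε) := by
    refine SS_le hp hδ hμ hh0.le fun ν hν hpr => ?_
    have i0 := (Gd_C0 (v (t - h))).integrable ν x
    have i1 := (Gd_C0 (v t)).integrable ν x
    have i2 := (Gd_C0 (v' t)).integrable ν x
    have k1 : ∫ y, v (t - h) (x + y) ∂ν ≤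
        ∫ y, ((v t (x + y) - h * v' t (x + y)) + ε / 4 * h) ∂ν := by
      refine integral_mono i0 ((i1.sub (i2.const_mul h)).add (integrable_const _)) fun y => ?_
      have := (abs_le.1 (H1 h hh0 m1 (x + y))).2
      show v (t - h) (x + y) ≤ v t (x + y) - h * v' t (x + y) + ε / 4 * h
      linarith
    rw [integral_add (f := fun y => v t (x + y) - h * v' t (x + y)) (i1.sub (i2.const_mul h))
      (integrable_const _), integral_sub i1 (i2.const_mul h), integral_const_mul] at k1
    simp only [integral_const, probReal_univ, smul_eq_mul, one_mul] at k1
    have k2 := H3 h hh0 m3 ν hν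
    have k3 := (abs_le.1 (H2 h hh0 m2 x)).2
    have k4 := (abs_le.1 (H4 h hh0.le m4 ν hν x)).1
    have k5 : h * (v' t x - ε / 4) ≤ h * ∫ y, v' t (x + y) ∂ν := by
      gcongr; linarith
    linarith
  have s4 : 0 ≤ h * (Av x + δ * ‖gradient (v t) x‖ - v' t x + ε) := by linarith
  have s5 := nonneg_of_mul_nonneg_right s4 hh0
  linarith

lemma super_ineq (hp : 1 < p) (hδ : 0 ≤ δ) (hμ : IsConvSemigroup p μ)
    (hμ0 : WContinuousAtZero p μ) (f : C₀(Ed d, ℝ)) {t : ℝ} (ht : 0 < t) (x : Ed d)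
    {v v' : ℝ → C₀(Ed d, ℝ)} (hv : IsTestFunction μ v v')
    (hle : ∀ s, 0 < s → ∀ y, v s y ≤ SlimD p δ μ s f y) (heq : v t x = SlimD p δ μ t f x)
    {Av : Ed d → ℝ} (hA : HasGenerator μ (v t) Av) :
    Av x + δ * ‖gradient (v t) x‖ ≤ v' t x := by
  refine le_of_forall_pos_le_add fun ε hε => ?_
  obtain ⟨hd, -, hc⟩ := hv t ht
  have he4 : 0 < ε / 5 := by positivity
  obtain ⟨w, hw, hwi⟩ := exists_dir hδ (gradient (v t) x)
  obtain ⟨τ1, hτ1, H1⟩ := deriv_left hd he4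
  obtain ⟨τ2, hτ2, H2⟩ := gen_exp hA he4
  obtain ⟨τ3, hτ3, H3⟩ := dir_exp hc x w he4
  obtain ⟨τ4, hτ4, H4⟩ := strong_cont hp hδ hμ hμ0 (Gd_C0 (v' t)) he4
  have hAc : Continuous (fun s : ℝ => Av (x + s • w)) :=
    (gen_cont hμ (Gd_C0 (v t)) hA).comp (by fun_prop)
  obtain ⟨τ6, hτ6, H6⟩ := Metric.continuousAt_iff.1 (hAc.continuousAt (x := 0)) _ he4
  obtain ⟨m, hm⟩ := hn_small
    (show 0 < min (min τ1 τ2) (min (min τ3 τ4) (min (t / 2) (τ6 / 2))) by positivity)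
  simp only [le_min_iff] at hm
  obtain ⟨⟨m1, m2⟩, ⟨m3, m4⟩, m5, m6⟩ := hm
  set h := hn m with hh
  have hh0 : 0 < h := hn_pos m
  have hth : 0 < t - h := by linarith
  have := (hμ.2.2 h hh0.le).1
  have s1 := U_step_lower hp hδ hμ hμ0 (Gd_C0 f) hth.le m hw x
  rw [← hh, sub_add_cancel] at s1
  have s2 := TT_mono hμ (w := w) (Gd_C0 (v (t - h))) (U_Gd hp hδ hμ (Gd_C0 f) hth.le) hh0.le
    (c := 0) (fun y => by simpa using hle _ hth y) x
  have s3 : v t x + h * (Av x + δ * ‖gradient (v t) x‖ - v' t x - ε) ≤ TT μ w h (v (t - h)) x := by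
    have i0 := TT_integrable hμ (Gd_C0 (v (t - h))) hh0.le (w := w) x
    have i1 := TT_integrable hμ (Gd_C0 (v t)) hh0.le (w := w) x
    have i2 := TT_integrable hμ (Gd_C0 (v' t)) hh0.le (w := w) x
    have k1 : ∫ y, ((v t (x + (y + h • w)) - h * v' t (x + (y + h • w))) - ε / 5 * h) ∂(μ h) ≤
        TT μ w h (v (t - h)) x := by
      refine integral_mono ((i1.sub (i2.const_mul h)).sub (integrable_const _)) i0 fun y => ?_
      have := (abs_le.1 (H1 h hh0 m1 (x + (y + h • w)))).1
      show v t (x + (y + h • w)) - h * v' t (x + (y + h • w)) - ε / 5 * h ≤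
        v (t - h) (x + (y + h • w))
      linarith
    rw [integral_sub (f := fun y => v t (x + (y + h • w)) - h * v' t (x + (y + h • w)))
      (i1.sub (i2.const_mul h))
      (integrable_const _), integral_sub i1 (i2.const_mul h), integral_const_mul] at k1
    simp only [integral_const, probReal_univ, smul_eq_mul, one_mul] at k1
    have k0 := TT_eq_Smu (μ := μ) w h (v t) x
    unfold TT at k0
    rw [k0] at k1
    have k2 := (abs_le.1 (H2 h hh0 m2 (x + h • w))).1
    have k3 := H3 h hh0 m3
    rw [hwi] at k3
    have hcv := (Gd_C0 (v' t)).uc.continuous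
    have k4 := (abs_le.1 (H4 h hh0.le m4 _ (shift_mem_Bl hp hμ hh0.le hw) x)).2
    rw [integral_map (by fun_prop) (by fun_prop)] at k4
    have k5 : h * ∫ y, v' t (x + (y + h • w)) ∂(μ h) ≤ h * (v' t x + ε / 5) := by
      gcongr; linarith
    have k6 := H6 (x := h) (by rw [Real.dist_eq, sub_zero, abs_of_pos hh0]; linarith)
    rw [Real.dist_eq, abs_lt] at k6
    simp only [zero_smul, add_zero] at k6
    have k7 : h * (Av x - ε / 5) ≤ h * Av (x + h • w) := by
      gcongr; linarith [k6.1]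
    linarith
  have s4 : h * (Av x + δ * ‖gradient (v t) x‖ - v' t x - ε) ≤ 0 := by linarith
  by_contra hcon
  push Not at hcon
  have : 0 < h * (Av x + δ * ‖gradient (v t) x‖ - v' t x - ε) := by
    apply mul_pos hh0; linarith
  linarith

/-- the value function as a curve in `C₀` -/
def uu (hp : 1 < p) (hδ : 0 ≤ δ) (hμ : IsConvSemigroup p μ) (f : C₀(Ed d, ℝ)) (t : ℝ) :
    C₀(Ed d, ℝ) :=
  if ht : 0 ≤ t then ⟨⟨SlimD p δ μ t f, (U_Gd hp hδ hμ (Gd_C0 f) ht).uc.continuous⟩,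
    U_vanish hp hδ hμ (Gd_C0 f) f.zero_at_infty' ht⟩ else 0

lemma uu_apply (hp : 1 < p) (hδ : 0 ≤ δ) (hμ : IsConvSemigroup p μ) (f : C₀(Ed d, ℝ)) {t : ℝ}
    (ht : 0 ≤ t) (x : Ed d) : uu hp hδ hμ f t x = SlimD p δ μ t f x := by
  unfold uu; rw [dif_pos ht]; rfl

lemma uu_zero (hp : 1 < p) (hδ : 0 ≤ δ) (hμ : IsConvSemigroup p μ)
    (hμ0 : WContinuousAtZero p μ) (f : C₀(Ed d, ℝ)) : uu hp hδ hμ f 0 = f := by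
  ext x
  rw [uu_apply hp hδ hμ f le_rfl, U_zero hp hδ hμ hμ0 (Gd_C0 f)]

lemma uu_cont (hp : 1 < p) (hδ : 0 ≤ δ) (hμ : IsConvSemigroup p μ)
    (hμ0 : WContinuousAtZero p μ) (f : C₀(Ed d, ℝ)) : ContinuousOn (uu hp hδ hμ f) (Ici 0) := by
  rw [Metric.continuousOn_iff]
  intro t ht ε hε
  obtain ⟨τ, hτ, H⟩ := U_time hp hδ hμ hμ0 (Gd_C0 f) (show 0 < ε / 2 by positivity)
  refine ⟨τ, hτ, fun s hs hst => ?_⟩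
  rw [mem_Ici] at hs ht
  rw [Real.dist_eq, abs_lt] at hst
  rw [← ZeroAtInftyContinuousMap.dist_toBCF_eq_dist]
  refine lt_of_le_of_lt ((BoundedContinuousFunction.dist_le (by positivity)).2 fun x => ?_)
    (half_lt_self hε)
  show dist (uu hp hδ hμ f s x) (uu hp hδ hμ f t x) ≤ ε / 2
  rw [uu_apply hp hδ hμ f hs, uu_apply hp hδ hμ f ht, Real.dist_eq]
  rcases le_total s t with h | h
  · rw [abs_sub_comm]; exact H s t hs h (by linarith) x
  · exact H t s ht h (by linarith) x

end P8

/-- Feynman–Kac: `u(t) = 𝒮(t)f` is a viscosity solution of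
`∂_t u = A^μ u + δ|∇u|` with `u(0) = f`. -/
theorem stmt_1 (d : ℕ) (hd : 1 ≤ d) (p : ℝ) (hp : 1 < p) (δ : ℝ) (hδ : 0 ≤ δ)
    (μ : ℝ → Measure (Ed d)) (hμ : IsConvSemigroup p μ) (hμ0 : WContinuousAtZero p μ)
    (f : C₀(Ed d, ℝ)) :
    ∃ u : ℝ → C₀(Ed d, ℝ),
      (∀ t : ℝ, 0 ≤ t → ∀ x, u t x = SlimD p δ μ t (⇑f) x) ∧
      IsViscositySubsolD δ μ f u ∧ IsViscositySupersolD δ μ f u := by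
  refine ⟨uu hp hδ hμ f, fun t ht x => uu_apply hp hδ hμ f ht x,
    ⟨uu_cont hp hδ hμ hμ0 f, uu_zero hp hδ hμ hμ0 f, ?_⟩,
    ⟨uu_cont hp hδ hμ hμ0 f, uu_zero hp hδ hμ hμ0 f, ?_⟩⟩
  · intro t ht x v v' hv hle heq Av hA
    exact sub_ineq hp hδ hμ hμ0 f ht x hv
      (fun s hs y => (uu_apply hp hδ hμ f hs.le y) ▸ hle s hs y)
      (heq.trans (uu_apply hp hδ hμ f ht.le x)) hA
  · intro t ht x v v' hv hle heq Av hA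
    exact super_ineq hp hδ hμ hμ0 f ht x hv
      (fun s hs y => (uu_apply hp hδ hμ f hs.le y) ▸ hle s hs y)
      (heq.trans (uu_apply hp hδ hμ f ht.le x)) hA
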